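/- Let L > 0, T > 0, β < 0, M > 0. Suppose h₁, h₂ : ℝ × [0,T] → ℝ are such that for each t, h_k(·,t) ∈ C⁴(ℝ) with h_k(x+L,t) = h_k(x,t) − 1, ∂_x h_k(x,t) ≤ β/2 < 0, |∂_x² h₁(x,t)| ≤ M, the maps are C¹ in t with continuous mixed derivatives, and each satisfies pointwise the evolution equation ∂_t h = −(2π/L)·H(∂_x³ h) + ∂_x²( (3 ∂_x h + 1/∂_x h) · ∂_x² h ), where H is the L-periodic Hilbert transform. Then there is a constant C, depending only on β, M, L, T, such that for all t ∈ [0,T]: ∫₀^L (h₁ − h₂)²(x,t) dx ≤ C · ∫₀^L (h₁ − h₂)²(x,0) dx. In particular, if h₁(·,0) = h₂(·,0) then h₁ ≡ h₂ on ℝ × [0,T]. -/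

import Mathlib

open Real Filter Topology MeasureTheory

/-- `IsStepPDESol L T β h H` says: for each `t ∈ [0,T]`, `h(·,t)` is `C⁴`, satisfies
`h(x+L,t) = h(x,t) − 1` and `∂ₓh ≤ β/2 < 0`; `h` is jointly continuous; `H(·,t)` is the
`L`-periodic Hilbert transform of `∂ₓ³h(·,t)` (principal-value characterization); and `h`
solves, in the `HasDerivWithinAt` sense in time on `[0,T]`,
`∂ₜh = −(2π/L) H(∂ₓ³h) + ∂ₓ²((3∂ₓh + 1/∂ₓh)·∂ₓ²h)`. -/
def IsStepPDESol (L T β : ℝ) (h H : ℝ → ℝ → ℝ) : Prop :=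
  (∀ t ∈ Set.Icc (0:ℝ) T, ContDiff ℝ 4 (fun x => h x t)) ∧
  (∀ t ∈ Set.Icc (0:ℝ) T, ∀ x : ℝ, h (x + L) t = h x t - 1) ∧
  (∀ t ∈ Set.Icc (0:ℝ) T, ∀ x : ℝ, deriv (fun z => h z t) x ≤ β / 2) ∧
  Continuous (fun p : ℝ × ℝ => h p.1 p.2) ∧
  (∀ x : ℝ, ∀ t ∈ Set.Icc (0:ℝ) T,
    Tendsto (fun δ : ℝ =>
        (1 / L) * ∫ s in δ..(L - δ),
          iteratedDeriv 3 (fun z => h z t) (x - s) * Real.cot (π * s / L))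
      (𝓝[>] (0:ℝ)) (𝓝 (H x t))) ∧
  (∀ x : ℝ, ∀ t ∈ Set.Icc (0:ℝ) T,
    HasDerivWithinAt (fun τ => h x τ)
      (-(2 * π / L) * H x t
        + iteratedDeriv 2
            (fun y => (3 * deriv (fun z => h z t) y + 1 / deriv (fun z => h z t) y)
              * iteratedDeriv 2 (fun z => h z t) y) x)
      (Set.Icc 0 T) t)


lemma aux_cot1 {L s : ℝ} (hL : 0 < L) (hs : 0 < s) (hs2 : s ≤ L / 2) :
    |Real.cot (π * s / L)| * s ≤ L / π := by
  have hp := Real.pi_pos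
  set y := π * s / L with hy
  have hy0 : 0 < y := by positivity
  have hy1 : y ≤ π / 2 := by
    rw [hy, div_le_iff₀ hL]; nlinarith
  have hsin : 0 < Real.sin y := Real.sin_pos_of_pos_of_lt_pi hy0 (by linarith)
  have hcos : 0 ≤ Real.cos y := Real.cos_nonneg_of_neg_pi_div_two_le_of_le (by linarith) hy1
  have key : y * Real.cos y ≤ Real.sin y := by
    rcases hy1.lt_or_eq with h | h
    · have hc : 0 < Real.cos y := Real.cos_pos_of_mem_Ioo ⟨by linarith, h⟩
      have := (Real.lt_tan hy0 h).le
      rw [Real.tan_eq_sin_div_cos, le_div_iff₀ hc] at this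
      exact this
    · rw [h]; simp
  rw [Real.cot_eq_cos_div_sin, abs_of_nonneg (by positivity)]
  have hsy : s = y * (L / π) := by rw [hy]; field_simp
  rw [hsy, div_mul_eq_mul_div, div_le_iff₀ hsin]
  have : 0 < L / π := by positivity
  nlinarith

lemma aux_cot_symm {L s : ℝ} (hL : 0 < L) :
    Real.cot (π * (L - s) / L) = - Real.cot (π * s / L) := by
  have : π * (L - s) / L = π - π * s / L := by field_simp
  rw [this, Real.cot_eq_cos_div_sin, Real.cot_eq_cos_div_sin, Real.cos_pi_sub, Real.sin_pi_sub,
    neg_div]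

lemma aux_cot2 {L s : ℝ} (hL : 0 < L) (hs : s < L) (hs2 : L / 2 ≤ s) :
    |Real.cot (π * s / L)| * (L - s) ≤ L / π := by
  have := aux_cot1 hL (s := L - s) (by linarith) (by linarith)
  rwa [aux_cot_symm hL, abs_neg] at this

lemma aux_kernel {L δ : ℝ} (hL : 0 < L) (hδ : 0 < δ) (hδ2 : δ < L / 2) :
    ∃ k : ℝ → ℝ, Continuous k ∧ ∀ s ∈ Set.Icc δ (L - δ), k s = Real.cot (π * s / L) := by
  refine ⟨fun s => Real.cot (π * (max δ (min s (L - δ))) / L), ?_, ?_⟩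
  · simp only [Real.cot_eq_cos_div_sin]
    refine Continuous.div (by fun_prop) (by fun_prop) ?_
    intro s
    have hp := Real.pi_pos
    have h1 : δ ≤ max δ (min s (L - δ)) := le_max_left _ _
    have h2 : max δ (min s (L - δ)) ≤ L - δ := max_le (by linarith) (min_le_right _ _)
    apply ne_of_gt
    apply Real.sin_pos_of_pos_of_lt_pi
    · have : 0 < max δ (min s (L - δ)) := by linarith
      positivity
    · rw [div_lt_iff₀ hL]; nlinarith
  · intro s hs
    simp only [min_eq_left hs.2, max_eq_right hs.1]

lemma aux_cot_int {L δ : ℝ} (hL : 0 < L) :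
    ∫ s in δ..(L - δ), Real.cot (π * s / L) = 0 := by
  have h := intervalIntegral.integral_comp_sub_left (a := δ) (b := L - δ)
    (fun s => Real.cot (π * s / L)) L
  simp only [sub_sub_cancel, aux_cot_symm hL, intervalIntegral.integral_neg] at h
  linarith

/-- bound of the truncated Hilbert transform -/
lemma aux_pv_bound {L N : ℝ} (hL : 0 < L) (hN : 0 ≤ N) {u : ℝ → ℝ} (hu : Continuous u)
    (hper : ∀ x, u (x + L) = u x) (hlip : ∀ x y, |u x - u y| ≤ N * |x - y|)
    {δ : ℝ} (hδ : 0 < δ) (hδ2 : δ < L / 2) (x : ℝ) :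
    |∫ s in δ..(L - δ), u (x - s) * Real.cot (π * s / L)| ≤ N * (L / π) * L := by
  obtain ⟨k, hk, hk'⟩ := aux_kernel hL hδ hδ2
  have hle : δ ≤ L - δ := by linarith
  have e1 : ∫ s in δ..(L - δ), u (x - s) * Real.cot (π * s / L)
      = ∫ s in δ..(L - δ), (u (x - s) - u x) * Real.cot (π * s / L) := by
    have a1 : ∫ s in δ..(L - δ), u (x - s) * Real.cot (π * s / L)
       = ∫ s in δ..(L - δ), u (x - s) * k s := by
      apply intervalIntegral.integral_congr
      intro s hs
      rw [Set.uIcc_of_le hle] at hs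
      simp only [hk' s hs]
    have a2 : ∫ s in δ..(L - δ), (u (x - s) - u x) * Real.cot (π * s / L)
       = ∫ s in δ..(L - δ), (u (x - s) * k s - u x * k s) := by
      apply intervalIntegral.integral_congr
      intro s hs
      rw [Set.uIcc_of_le hle] at hs
      simp only [hk' s hs]; ring
    have a3 : ∫ s in δ..(L - δ), k s = 0 := by
      rw [← aux_cot_int (δ := δ) hL]
      apply intervalIntegral.integral_congr
      intro s hs
      rw [Set.uIcc_of_le hle] at hs
      simp only [hk' s hs]
    rw [a1, a2, intervalIntegral.integral_sub, intervalIntegral.integral_const_mul, a3]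
    · ring
    · exact Continuous.intervalIntegrable (by fun_prop) _ _
    · exact Continuous.intervalIntegrable (by fun_prop) _ _
  rw [e1]
  have hp := Real.pi_pos
  have := intervalIntegral.norm_integral_le_of_norm_le_const (a := δ) (b := L - δ)
    (f := fun s => (u (x - s) - u x) * Real.cot (π * s / L)) (C := N * (L / π)) ?_
  · rw [Real.norm_eq_abs] at this
    refine this.trans ?_
    apply mul_le_mul_of_nonneg_left _ (by positivity)
    rw [abs_of_nonneg (by linarith)]; linarith
  · intro s hs
    rw [Set.uIoc_of_le hle] at hs
    have hs0 : 0 < s := by linarith [hs.1]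
    have hsL : s < L := by linarith [hs.2]
    rw [Real.norm_eq_abs, abs_mul]
    rcases le_total s (L / 2) with h | h
    · have b1 := hlip (x - s) x
      have b2 := aux_cot1 hL hs0 h
      have : |x - s - x| = s := by rw [sub_sub_cancel_left, abs_neg, abs_of_pos hs0]
      rw [this] at b1
      calc _ ≤ N * s * |Real.cot (π * s / L)| := by gcongr
        _ = N * (|Real.cot (π * s / L)| * s) := by ring
        _ ≤ _ := by gcongr
    · have b1 := hlip (x - s + L) x
      have b2 := aux_cot2 hL hsL h
      have : |x - s + L - x| = L - s := by
        rw [show x - s + L - x = L - s by ring, abs_of_pos (by linarith)]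
      rw [this, hper] at b1
      calc _ ≤ N * (L - s) * |Real.cot (π * s / L)| := by gcongr
        _ = N * (|Real.cot (π * s / L)| * (L - s)) := by ring
        _ ≤ _ := by gcongr

lemma aux_ibp {L : ℝ} {f f' g g' : ℝ → ℝ} (hf : ∀ x, HasDerivAt f (f' x) x)
    (hg : ∀ x, HasDerivAt g (g' x) x) (hf' : Continuous f') (hg' : Continuous g')
    (pf : ∀ x, f (x + L) = f x) (pg : ∀ x, g (x + L) = g x) :
    ∫ x in (0:ℝ)..L, f x * g' x = - ∫ x in (0:ℝ)..L, f' x * g x := by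
  have := intervalIntegral.integral_mul_deriv_eq_deriv_mul (a := 0) (b := L)
    (u := f) (v := g) (u' := f') (v' := g') (fun x _ => hf x) (fun x _ => hg x)
    (hf'.intervalIntegrable _ _) (hg'.intervalIntegrable _ _)
  rw [this]
  have a := pf 0
  have b := pg 0
  rw [zero_add] at a b
  rw [a, b]; ring

lemma aux_shift {L : ℝ} {f : ℝ → ℝ} (pf : ∀ x, f (x + L) = f x) (s : ℝ) :
    ∫ x in (0:ℝ)..L, f (x - s) = ∫ x in (0:ℝ)..L, f x := by
  rw [intervalIntegral.integral_comp_sub_right f s]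
  have := Function.Periodic.intervalIntegral_add_eq (f := f) (T := L) pf (0 - s) 0
  rw [zero_add] at this
  rw [← this]; congr 1; ring

/-- Young's inequality for shifted periodic functions -/
lemma aux_young {L : ℝ} (hL : 0 < L) {f g : ℝ → ℝ} (hf : Continuous f) (hg : Continuous g)
    (pg : ∀ x, g (x + L) = g x) (s : ℝ) {η : ℝ} (hη : 0 < η) :
    |∫ x in (0:ℝ)..L, f x * g (x - s)| ≤
      η * (∫ x in (0:ℝ)..L, f x ^ 2) + (1 / (4 * η)) * ∫ x in (0:ℝ)..L, g x ^ 2 := by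
  have e := aux_shift (f := fun x => g x ^ 2) (L := L) (fun x => by simp only [pg]) s
  rw [← e, ← intervalIntegral.integral_const_mul, ← intervalIntegral.integral_const_mul,
    ← intervalIntegral.integral_add (Continuous.intervalIntegrable (by fun_prop) _ _)
      (Continuous.intervalIntegrable (by fun_prop) _ _)]
  refine (intervalIntegral.abs_integral_le_integral_abs hL.le).trans ?_
  apply intervalIntegral.integral_mono_on hL.le
  · exact Continuous.intervalIntegrable (by fun_prop) _ _
  · exact Continuous.intervalIntegrable (by fun_prop) _ _
  · intro x _
    have hh : ∀ a b : ℝ, a * b ≤ η * a ^ 2 + 1 / (4 * η) * b ^ 2 := by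
      intro a b
      have : η * a ^ 2 + 1 / (4 * η) * b ^ 2 - a * b = η * (a - b / (2 * η)) ^ 2 := by
        field_simp; ring
      have h2 : 0 ≤ η * (a - b / (2 * η)) ^ 2 := by positivity
      linarith
    rw [abs_le]
    refine ⟨?_, hh _ _⟩
    have := hh (-f x) (g (x - s))
    nlinarith

lemma aux_swap {a b c d : ℝ} {F : ℝ → ℝ → ℝ} (hF : Continuous (Function.uncurry F)) :
    ∫ x in a..b, ∫ y in c..d, F x y = ∫ y in c..d, ∫ x in a..b, F x y := by
  apply intervalIntegral_intervalIntegral_swap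
  have h : IsCompact (Set.uIcc a b ×ˢ Set.uIcc c d) := isCompact_uIcc.prod isCompact_uIcc
  refine (hF.continuousOn.integrableOn_compact h).mono_set ?_
  exact Set.prod_mono Set.uIoc_subset_uIcc Set.uIoc_subset_uIcc

/-- correlation Lipschitz bound -/
lemma aux_corr {L : ℝ} (hL : 0 < L) {w1 w2 : ℝ → ℝ} (h1 : ∀ x, HasDerivAt w1 (w2 x) x)
    (c2 : Continuous w2) (p1 : ∀ x, w1 (x + L) = w1 x) (p2 : ∀ x, w2 (x + L) = w2 x) (s : ℝ) :
    |∫ x in (0:ℝ)..L, w2 x * w1 (x - s)| ≤ |s| * ∫ x in (0:ℝ)..L, w2 x ^ 2 := by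
  have c1 : Continuous w1 := continuous_iff_continuousAt.2 fun x => (h1 x).continuousAt
  have z : ∫ x in (0:ℝ)..L, w2 x * w1 x = 0 := by
    have := aux_ibp (L := L) h1 h1 c2 c2 p1 p1
    have e : ∫ x in (0:ℝ)..L, w1 x * w2 x = ∫ x in (0:ℝ)..L, w2 x * w1 x := by
      congr 1; ext x; ring
    linarith
  have e1 : ∫ x in (0:ℝ)..L, w2 x * w1 (x - s)
      = ∫ x in (0:ℝ)..L, ∫ r in (0:ℝ)..s, -(w2 x * w2 (x - r)) := by
    have e0 : ∫ x in (0:ℝ)..L, w2 x * w1 (x - s)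
        = ∫ x in (0:ℝ)..L, (w2 x * w1 (x - s) - w2 x * w1 x) := by
      rw [intervalIntegral.integral_sub (Continuous.intervalIntegrable (by fun_prop) _ _)
        (Continuous.intervalIntegrable (by fun_prop) _ _), z, sub_zero]
    rw [e0]
    congr 1; ext x
    have : ∫ r in (0:ℝ)..s, -(w2 x * w2 (x - r)) = w2 x * w1 (x - s) - w2 x * w1 (x - 0) := by
      apply intervalIntegral.integral_eq_sub_of_hasDerivAt (f := fun r => w2 x * w1 (x - r))
      · intro r _
        have := ((h1 (x - r)).comp_const_sub x r).const_mul (w2 x)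
        rw [mul_neg] at this
        exact this
      · exact Continuous.intervalIntegrable (by fun_prop) _ _
    rw [this, sub_zero]
  rw [e1, aux_swap (by fun_prop)]
  have := intervalIntegral.norm_integral_le_of_norm_le_const (a := 0) (b := s)
    (f := fun r => ∫ x in (0:ℝ)..L, -(w2 x * w2 (x - r))) (C := ∫ x in (0:ℝ)..L, w2 x ^ 2) ?_
  · rw [Real.norm_eq_abs, sub_zero] at this
    linarith
  · intro r _
    rw [intervalIntegral.integral_neg, norm_neg, Real.norm_eq_abs]
    have := aux_young hL c2 c2 p2 r (η := 1/2) (by norm_num)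
    linarith


lemma aux_cont {f f' : ℝ → ℝ} (h : ∀ x, HasDerivAt f (f' x) x) : Continuous f :=
  continuous_iff_continuousAt.2 fun x => (h x).continuousAt

lemma aux_nic {a b C : ℝ} {f : ℝ → ℝ} (h : ∀ x ∈ Set.uIoc a b, |f x| ≤ C) :
    |∫ x in a..b, f x| ≤ C * |b - a| := by
  have := intervalIntegral.norm_integral_le_of_norm_le_const (f := f) (C := C) (a := a) (b := b)
    (fun x hx => by rw [Real.norm_eq_abs]; exact h x hx)
  rwa [Real.norm_eq_abs] at this

lemma aux_bilin {L : ℝ} (hL : 0 < L) {ε : ℝ} (hε : 0 < ε) :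
    ∃ C ρ : ℝ, 0 < ρ ∧ 0 ≤ C ∧ ∀ w0 w1 w2 w3 : ℝ → ℝ, (∀ x, HasDerivAt w0 (w1 x) x) →
      (∀ x, HasDerivAt w1 (w2 x) x) → (∀ x, HasDerivAt w2 (w3 x) x) → Continuous w3 →
      (∀ x, w0 (x + L) = w0 x) → (∀ x, w1 (x + L) = w1 x) → (∀ x, w2 (x + L) = w2 x) →
      ∀ δ, 0 < δ → δ < ρ →
      |∫ x in (0:ℝ)..L, w0 x * ∫ s in δ..(L - δ), w3 (x - s) * Real.cot (π * s / L)| ≤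
        ε * (∫ x in (0:ℝ)..L, w2 x ^ 2) + C * ∫ x in (0:ℝ)..L, w1 x ^ 2 := by
  have hp := Real.pi_pos
  set ρ := min (L / 4) (ε * π / (4 * L)) with hρ
  have hρ0 : 0 < ρ := by rw [hρ]; apply lt_min <;> positivity
  have hρ1 : ρ ≤ L / 4 := min_le_left _ _
  have hρ2 : ρ ≤ ε * π / (4 * L) := min_le_right _ _
  set η := ε * π * ρ / (2 * L ^ 2) with hη
  have hη0 : 0 < η := by positivity
  refine ⟨(L / π) * (L / ρ) * (1 / (4 * η)), ρ, hρ0, by positivity, ?_⟩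
  intro w0 w1 w2 w3 h0 h1 h2 c3 p0 p1 p2 δ hδ hδρ
  have c0 := aux_cont h0
  have c1 := aux_cont h1
  have c2 := aux_cont h2
  obtain ⟨k, hk, hk'⟩ := aux_kernel hL hδ (by linarith)
  have hle : δ ≤ L - δ := by linarith
  set A : ℝ → ℝ := fun s => ∫ x in (0:ℝ)..L, w2 x * w1 (x - s) with hA
  have cA : Continuous A := by
    apply intervalIntegral.continuous_parametric_intervalIntegral_of_continuous'
    fun_prop
  have perA : ∀ s, A (s - L) = A s := by
    intro s
    simp only [hA]
    congr 1; ext x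
    rw [show x - (s - L) = x - s + L by ring, p1]
  have hAs : ∀ s, ∫ x in (0:ℝ)..L, w0 x * w3 (x - s) = A s := by
    intro s
    have d1 : ∀ x, HasDerivAt (fun x => w1 (x - s)) (w2 (x - s)) x :=
      fun x => (h1 (x - s)).comp_sub_const x s
    have d2 : ∀ x, HasDerivAt (fun x => w2 (x - s)) (w3 (x - s)) x :=
      fun x => (h2 (x - s)).comp_sub_const x s
    have sh : ∀ x, x + L - s = x - s + L := fun x => by ring
    have e1 := aux_ibp (L := L) h0 d2 c1 (by fun_prop) p0
      (fun x => by rw [sh, p2])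
    have e2 := aux_ibp (L := L) h1 d1 c2 (by fun_prop) p1
      (fun x => by rw [sh, p1])
    rw [e1, e2, neg_neg]
  have e1 : ∫ x in (0:ℝ)..L, w0 x * ∫ s in δ..(L - δ), w3 (x - s) * Real.cot (π * s / L)
      = ∫ s in δ..(L - δ), A s * k s := by
    have : ∀ x, w0 x * ∫ s in δ..(L - δ), w3 (x - s) * Real.cot (π * s / L)
        = ∫ s in δ..(L - δ), w0 x * w3 (x - s) * k s := by
      intro x
      rw [← intervalIntegral.integral_const_mul]
      apply intervalIntegral.integral_congr
      intro s hs
      rw [Set.uIcc_of_le hle] at hs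
      simp only [hk' s hs]; ring
    simp only [this]
    rw [aux_swap (by fun_prop)]
    congr 1; ext s
    rw [intervalIntegral.integral_mul_const, hAs]
  rw [e1]
  set a := ∫ x in (0:ℝ)..L, w2 x ^ 2 with ha
  set b := ∫ x in (0:ℝ)..L, w1 x ^ 2 with hb
  have a0 : 0 ≤ a := intervalIntegral.integral_nonneg hL.le fun x _ => by positivity
  have b0 : 0 ≤ b := intervalIntegral.integral_nonneg hL.le fun x _ => by positivity
  have B1 : ∀ s, |A s| ≤ η * a + 1 / (4 * η) * b := fun s => aux_young hL c2 c1 p1 s hη0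
  have B2 : ∀ s, |A s| ≤ |s| * a := fun s => aux_corr hL h1 c2 p1 p2 s
  have B3 : ∀ s, |A s| ≤ |s - L| * a := fun s => by
    rw [← perA s]; exact aux_corr hL h1 c2 p1 p2 _
  have ii : ∀ x y, IntervalIntegrable (fun s => A s * k s) volume x y := fun x y =>
    Continuous.intervalIntegrable (by fun_prop) _ _
  have hLp : 0 < L / π := by positivity
  rw [← intervalIntegral.integral_add_adjacent_intervals (ii δ ρ) (ii ρ (L - δ)),
    ← intervalIntegral.integral_add_adjacent_intervals (ii ρ (L - ρ)) (ii (L - ρ) (L - δ))]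
  have I1 : |∫ s in δ..ρ, A s * k s| ≤ (L / π * a) * |ρ - δ| := by
    apply aux_nic
    intro s hs
    rw [Set.uIoc_of_le hδρ.le] at hs
    have hs0 : 0 < s := by linarith [hs.1]
    rw [hk' s ⟨hs.1.le, by linarith [hs.2]⟩, abs_mul]
    have c := aux_cot1 hL hs0 (by linarith [hs.2])
    have B := B2 s
    rw [abs_of_pos hs0] at B
    calc _ ≤ s * a * |Real.cot (π * s / L)| := by gcongr
      _ = (|Real.cot (π * s / L)| * s) * a := by ring
      _ ≤ _ := by gcongr
  have I3 : |∫ s in (L - ρ)..(L - δ), A s * k s| ≤ (L / π * a) * |(L - δ) - (L - ρ)| := by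
    apply aux_nic
    intro s hs
    rw [Set.uIoc_of_le (by linarith)] at hs
    have hs0 : s < L := by linarith [hs.2]
    rw [hk' s ⟨by linarith [hs.1], hs.2⟩, abs_mul]
    have c := aux_cot2 hL hs0 (by linarith [hs.1])
    have B := B3 s
    rw [abs_sub_comm, abs_of_pos (by linarith : 0 < L - s)] at B
    calc _ ≤ (L - s) * a * |Real.cot (π * s / L)| := by gcongr
      _ = (|Real.cot (π * s / L)| * (L - s)) * a := by ring
      _ ≤ _ := by gcongr
  have I2 : |∫ s in ρ..(L - ρ), A s * k s|
      ≤ ((η * a + 1 / (4 * η) * b) * (L / π / ρ)) * |L - ρ - ρ| := by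
    apply aux_nic
    intro s hs
    rw [Set.uIoc_of_le (by linarith)] at hs
    rw [hk' s ⟨by linarith [hs.1], by linarith [hs.2]⟩, abs_mul]
    have c : |Real.cot (π * s / L)| ≤ L / π / ρ := by
      rw [le_div_iff₀ hρ0]
      rcases le_total s (L / 2) with h | h
      · refine le_trans ?_ (aux_cot1 hL (by linarith [hs.1]) h)
        gcongr; exact hs.1.le
      · refine le_trans ?_ (aux_cot2 hL (by linarith [hs.2]) h)
        gcongr; linarith [hs.2]
    have := B1 s
    gcongr
  rw [abs_of_nonneg (by linarith : 0 ≤ ρ - δ)] at I1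
  rw [abs_of_nonneg (by linarith : 0 ≤ L - ρ - ρ)] at I2
  rw [abs_of_nonneg (by linarith : 0 ≤ L - δ - (L - ρ))] at I3
  have J1 : (L / π * a) * (ρ - δ) ≤ (L / π * a) * ρ := by gcongr; linarith
  have J3 : (L / π * a) * (L - δ - (L - ρ)) ≤ (L / π * a) * ρ := by gcongr; linarith
  have J2 : ((η * a + 1 / (4 * η) * b) * (L / π / ρ)) * (L - ρ - ρ)
     ≤ ((η * a + 1 / (4 * η) * b) * (L / π / ρ)) * L := by gcongr; linarith
  have K1 : L / π * ρ ≤ ε / 4 := by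
    calc L / π * ρ ≤ L / π * (ε * π / (4 * L)) := by gcongr
      _ = ε / 4 := by field_simp
  have K2 : η * (L / π / ρ) * L = ε / 2 := by rw [hη]; field_simp
  have T1 := abs_add_le (∫ s in δ..ρ, A s * k s)
    ((∫ s in ρ..(L - ρ), A s * k s) + ∫ s in (L - ρ)..(L - δ), A s * k s)
  have T2 := abs_add_le (∫ s in ρ..(L - ρ), A s * k s) (∫ s in (L - ρ)..(L - δ), A s * k s)
  have K3 : (L / π * a) * ρ ≤ ε / 4 * a := by
    calc _ = (L / π * ρ) * a := by ring
      _ ≤ _ := by gcongr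
  have K4 : ((η * a + 1 / (4 * η) * b) * (L / π / ρ)) * L
      = ε / 2 * a + L / π * (L / ρ) * (1 / (4 * η)) * b := by
    rw [← K2]; ring
  linarith


lemma aux_H {L N : ℝ} (hL : 0 < L) (hN : 0 ≤ N) {u : ℝ → ℝ} (hu : Continuous u)
    (hper : ∀ x, u (x + L) = u x) (hlip : ∀ x y, |u x - u y| ≤ N * |x - y|) {H : ℝ → ℝ}
    (hH : ∀ x, Tendsto (fun δ : ℝ => (1 / L) * ∫ s in δ..(L - δ),
      u (x - s) * Real.cot (π * s / L)) (𝓝[>] (0:ℝ)) (𝓝 (H x))) :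
    Measurable H ∧ ∀ x, |H x| ≤ N * (L / π) := by
  have ev : ∀ᶠ δ in 𝓝[>] (0:ℝ), 0 < δ ∧ δ < L / 2 := by
    filter_upwards [Ioo_mem_nhdsGT (show (0:ℝ) < L / 2 by linarith)] with δ h
    exact h
  refine ⟨?_, ?_⟩
  · have ht : Tendsto (fun n : ℕ => L / ((n:ℝ) + 3)) atTop (𝓝[>] (0:ℝ)) := by
      rw [tendsto_nhdsWithin_iff]
      refine ⟨?_, Eventually.of_forall fun n => ?_⟩
      · have := (tendsto_natCast_atTop_atTop (R := ℝ)).atTop_add (tendsto_const_nhds (x := (3:ℝ)))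
        exact tendsto_const_nhds.div_atTop this
      · simp only [Set.mem_Ioi]; positivity
    refine measurable_of_tendsto_metrizable (f := fun n : ℕ => fun x => (1 / L) *
      ∫ s in (L / ((n:ℝ) + 3))..(L - (L / ((n:ℝ) + 3))), u (x - s) * Real.cot (π * s / L)) ?_ ?_
    · intro n
      have h1 : 0 < L / ((n:ℝ) + 3) := by positivity
      have h2 : L / ((n:ℝ) + 3) < L / 2 := by
        apply div_lt_div_of_pos_left hL (by norm_num)
        have : (0:ℝ) ≤ n := by positivity
        linarith
      obtain ⟨k, hk, hk'⟩ := aux_kernel hL h1 h2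
      have : (fun x => (1 / L) *
        ∫ s in (L / ((n:ℝ) + 3))..(L - (L / ((n:ℝ) + 3))), u (x - s) * Real.cot (π * s / L))
        = fun x => (1 / L) *
        ∫ s in (L / ((n:ℝ) + 3))..(L - (L / ((n:ℝ) + 3))), u (x - s) * k s := by
        ext x
        congr 1
        apply intervalIntegral.integral_congr
        intro s hs
        rw [Set.uIcc_of_le (by linarith)] at hs
        simp only [hk' s hs]
      rw [this]
      apply Continuous.measurable
      apply Continuous.mul continuous_const
      apply intervalIntegral.continuous_parametric_intervalIntegral_of_continuous'
      fun_prop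
    · rw [tendsto_pi_nhds]
      intro x
      exact (hH x).comp ht
  · intro x
    refine le_of_tendsto (hH x).abs ?_
    filter_upwards [ev] with δ hδ
    have := aux_pv_bound hL hN hu hper hlip hδ.1 hδ.2 x
    rw [abs_mul, abs_of_pos (by positivity : 0 < 1 / L)]
    calc _ ≤ 1 / L * (N * (L / π) * L) := by gcongr
      _ = _ := by field_simp

structure AuxJet (L β : ℝ) (f0 f1 f2 f3 f4 : ℝ → ℝ) : Prop where
  d0 : ∀ x, HasDerivAt f0 (f1 x) x
  d1 : ∀ x, HasDerivAt f1 (f2 x) x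
  d2 : ∀ x, HasDerivAt f2 (f3 x) x
  d3 : ∀ x, HasDerivAt f3 (f4 x) x
  c4 : Continuous f4
  sh : ∀ x, f0 (x + L) = f0 x - 1
  sl : ∀ x, f1 x ≤ β / 2

lemma aux_per {L c : ℝ} {f f' : ℝ → ℝ} (h : ∀ x, HasDerivAt f (f' x) x)
    (hp : ∀ x, f (x + L) = f x - c) : ∀ x, f' (x + L) = f' x := by
  intro x
  have h1 : HasDerivAt (fun y => f (y + L)) (f' (x + L)) x := (h (x + L)).comp_add_const x L
  have h2 : HasDerivAt (fun y => f y - c) (f' x) x := (h x).sub_const c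
  have : (fun y => f (y + L)) = fun y => f y - c := funext hp
  rw [this] at h1
  exact h1.unique h2

lemma aux_per0 {L : ℝ} {f f' : ℝ → ℝ} (h : ∀ x, HasDerivAt f (f' x) x)
    (hp : ∀ x, f (x + L) = f x) : ∀ x, f' (x + L) = f' x :=
  aux_per (c := 0) h (fun x => by rw [hp, sub_zero])

namespace AuxJet
variable {L β : ℝ} {f0 f1 f2 f3 f4 : ℝ → ℝ}
lemma p1 (j : AuxJet L β f0 f1 f2 f3 f4) : ∀ x, f1 (x + L) = f1 x := aux_per j.d0 j.sh
lemma p2 (j : AuxJet L β f0 f1 f2 f3 f4) : ∀ x, f2 (x + L) = f2 x := aux_per0 j.d1 j.p1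
lemma p3 (j : AuxJet L β f0 f1 f2 f3 f4) : ∀ x, f3 (x + L) = f3 x := aux_per0 j.d2 j.p2
lemma p4 (j : AuxJet L β f0 f1 f2 f3 f4) : ∀ x, f4 (x + L) = f4 x := aux_per0 j.d3 j.p3
lemma c0 (j : AuxJet L β f0 f1 f2 f3 f4) : Continuous f0 := aux_cont j.d0
lemma c1 (j : AuxJet L β f0 f1 f2 f3 f4) : Continuous f1 := aux_cont j.d1
lemma c2 (j : AuxJet L β f0 f1 f2 f3 f4) : Continuous f2 := aux_cont j.d2
lemma c3 (j : AuxJet L β f0 f1 f2 f3 f4) : Continuous f3 := aux_cont j.d3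
end AuxJet

/-- first derivative of the flux -/
noncomputable def auxG1 (p q r : ℝ) : ℝ := (3 - (p⁻¹) ^ 2) * q ^ 2 + (3 * p + p⁻¹) * r
/-- second derivative of the flux -/
noncomputable def auxG (p q r k : ℝ) : ℝ :=
  2 * (p⁻¹) ^ 3 * q ^ 3 + 3 * (3 - (p⁻¹) ^ 2) * q * r + (3 * p + p⁻¹) * k

lemma aux_flux1 {L β : ℝ} (hβ : β < 0) {f0 f1 f2 f3 f4 : ℝ → ℝ} (j : AuxJet L β f0 f1 f2 f3 f4)
    (x : ℝ) : HasDerivAt (fun y => (3 * f1 y + (f1 y)⁻¹) * f2 y) (auxG1 (f1 x) (f2 x) (f3 x)) x := by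
  have hne : f1 x ≠ 0 := by have := j.sl x; intro h; linarith
  have := (((j.d1 x).const_mul 3).add ((j.d1 x).inv hne)).mul (j.d2 x)
  refine this.congr_deriv ?_
  simp only [auxG1, Pi.add_apply, Pi.inv_apply]
  field_simp
  try ring

lemma aux_flux2 {L β : ℝ} (hβ : β < 0) {f0 f1 f2 f3 f4 : ℝ → ℝ} (j : AuxJet L β f0 f1 f2 f3 f4)
    (x : ℝ) : HasDerivAt (fun y => auxG1 (f1 y) (f2 y) (f3 y))
      (auxG (f1 x) (f2 x) (f3 x) (f4 x)) x := by
  have hne : f1 x ≠ 0 := by have := j.sl x; intro h; linarith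
  have e := ((((j.d1 x).inv hne).pow 2).const_sub 3).mul ((j.d2 x).pow 2)
  have := e.add ((((j.d1 x).const_mul 3).add ((j.d1 x).inv hne)).mul (j.d3 x))
  refine this.congr_deriv ?_
  simp only [auxG, Pi.add_apply, Pi.inv_apply, Pi.pow_apply, Nat.add_one_sub_one, pow_one,
    show (2:ℕ) - 1 = 1 from rfl]
  push_cast
  field_simp
  ring

lemma aux_bdd {L : ℝ} (hL : 0 < L) {f : ℝ → ℝ} (hf : Continuous f) (pf : ∀ x, f (x + L) = f x) :
    ∃ N, 0 ≤ N ∧ ∀ x, |f x| ≤ N := by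
  obtain ⟨N, hN⟩ := (isCompact_Icc (a := (0:ℝ)) (b := L)).exists_bound_of_continuousOn
    hf.continuousOn
  refine ⟨N, (norm_nonneg _).trans (hN 0 ⟨le_rfl, hL.le⟩), fun x => ?_⟩
  obtain ⟨y, hy, hxy⟩ := Function.Periodic.exists_mem_Ico₀ (f := f) pf hL x
  rw [hxy]
  exact hN y ⟨hy.1, hy.2.le⟩

lemma aux_lip {f f' : ℝ → ℝ} {N : ℝ} (h : ∀ x, HasDerivAt f (f' x) x) (hN : ∀ x, |f' x| ≤ N) :
    ∀ x y, |f x - f y| ≤ N * |x - y| := by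
  intro x y
  have := Convex.norm_image_sub_le_of_norm_hasDerivWithin_le (f := f) (f' := f') (s := Set.univ)
    (x := y) (y := x) (C := N) (fun z _ => (h z).hasDerivWithinAt) (fun z _ => by
      rw [Real.norm_eq_abs]; exact hN z)
    convex_univ (Set.mem_univ _) (Set.mem_univ _)
  simpa [Real.norm_eq_abs] using this


lemma aux_bint {a b : ℝ} {f : ℝ → ℝ} (hf : Measurable f) {N : ℝ} (hN : ∀ x, |f x| ≤ N) :
    IntervalIntegrable f volume a b := by
  rw [intervalIntegrable_iff]
  exact Measure.integrableOn_of_bounded (M := N) (by simp [Set.uIoc]) hf.aestronglyMeasurable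
    (Eventually.of_forall fun x => by rw [Real.norm_eq_abs]; exact hN x)

/-- pairing with the Hilbert transform -/
lemma aux_pair {L : ℝ} (hL : 0 < L) {ε : ℝ} (hε : 0 < ε) :
    ∃ C : ℝ, 0 ≤ C ∧ ∀ w0 w1 w2 w3 w4 : ℝ → ℝ, (∀ x, HasDerivAt w0 (w1 x) x) →
      (∀ x, HasDerivAt w1 (w2 x) x) → (∀ x, HasDerivAt w2 (w3 x) x) →
      (∀ x, HasDerivAt w3 (w4 x) x) → Continuous w4 →
      (∀ x, w0 (x + L) = w0 x) → ∀ H : ℝ → ℝ,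
      (∀ x, Tendsto (fun δ : ℝ => (1 / L) * ∫ s in δ..(L - δ),
        w3 (x - s) * Real.cot (π * s / L)) (𝓝[>] (0:ℝ)) (𝓝 (H x))) →
      |∫ x in (0:ℝ)..L, w0 x * H x| ≤
        ε * (∫ x in (0:ℝ)..L, w2 x ^ 2) + C * ∫ x in (0:ℝ)..L, w1 x ^ 2 := by
  obtain ⟨C, ρ, hρ, hC, h⟩ := aux_bilin hL (ε := L * ε) (by positivity)
  refine ⟨(1 / L) * C, by positivity, ?_⟩
  intro w0 w1 w2 w3 w4 d0 d1 d2 d3 c4 p0 H hH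
  have p1 := aux_per0 d0 p0
  have p2 := aux_per0 d1 p1
  have p3 := aux_per0 d2 p2
  have p4 := aux_per0 d3 p3
  have c0 := aux_cont d0
  have c3 := aux_cont d3
  obtain ⟨N, hN, hN'⟩ := aux_bdd hL c4 p4
  obtain ⟨N0, hN0, hN0'⟩ := aux_bdd hL c0 p0
  have lip := aux_lip d3 hN'
  have ev : ∀ᶠ δ in 𝓝[>] (0:ℝ), 0 < δ ∧ δ < min (L / 2) ρ := by
    filter_upwards [Ioo_mem_nhdsGT (show (0:ℝ) < min (L / 2) ρ from lt_min (by linarith) hρ)]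
      with δ h
    exact h
  have ht : Tendsto (fun δ => ∫ x in (0:ℝ)..L, w0 x * ((1 / L) * ∫ s in δ..(L - δ),
        w3 (x - s) * Real.cot (π * s / L))) (𝓝[>] (0:ℝ)) (𝓝 (∫ x in (0:ℝ)..L, w0 x * H x)) := by
    apply intervalIntegral.tendsto_integral_filter_of_dominated_convergence
      (fun _ => N0 * ((1 / L) * (N * (L / π) * L)))
    · filter_upwards [ev] with δ hδ
      obtain ⟨k, hk, hk'⟩ := aux_kernel hL hδ.1 (hδ.2.trans_le (min_le_left _ _))
      have hle : δ ≤ L - δ := by linarith [hδ.2.trans_le (min_le_left (L/2) ρ)]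
      have : (fun x => w0 x * ((1 / L) * ∫ s in δ..(L - δ),
        w3 (x - s) * Real.cot (π * s / L))) = fun x => w0 x * ((1 / L) * ∫ s in δ..(L - δ),
        w3 (x - s) * k s) := by
        ext x
        congr 2
        apply intervalIntegral.integral_congr
        intro s hs
        rw [Set.uIcc_of_le hle] at hs
        simp only [hk' s hs]
      rw [this]
      apply Continuous.aestronglyMeasurable
      apply Continuous.mul c0
      apply Continuous.mul continuous_const
      apply intervalIntegral.continuous_parametric_intervalIntegral_of_continuous'
      fun_prop
    · filter_upwards [ev] with δ hδ
      refine Eventually.of_forall fun x _ => ?_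
      have := aux_pv_bound hL hN c3 p3 lip hδ.1 (hδ.2.trans_le (min_le_left _ _)) x
      rw [Real.norm_eq_abs, abs_mul, abs_mul, abs_of_pos (by positivity : 0 < 1 / L)]
      have := hN0' x
      gcongr
    · exact intervalIntegrable_const
    · exact Eventually.of_forall fun x _ => (hH x).const_mul _
  refine le_of_tendsto ht.abs ?_
  filter_upwards [ev] with δ hδ
  have := h w0 w1 w2 w3 d0 d1 d2 c3 p0 p1 p2 δ hδ.1 (hδ.2.trans_le (min_le_right _ _))
  have e : ∫ x in (0:ℝ)..L, w0 x * ((1 / L) * ∫ s in δ..(L - δ),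
        w3 (x - s) * Real.cot (π * s / L)) = (1 / L) * ∫ x in (0:ℝ)..L, w0 x * ∫ s in δ..(L - δ),
        w3 (x - s) * Real.cot (π * s / L) := by
    rw [← intervalIntegral.integral_const_mul]
    congr 1; ext x; ring
  rw [e, abs_mul, abs_of_pos (by positivity : 0 < 1 / L)]
  calc _ ≤ 1 / L * (L * ε * (∫ x in (0:ℝ)..L, w2 x ^ 2) + C * ∫ x in (0:ℝ)..L, w1 x ^ 2) := by
        gcongr
    _ = _ := by field_simp

set_option maxHeartbeats 2000000 in
/-- static dissipation inequality -/
lemma aux_static {L β M : ℝ} (hL : 0 < L) (hβ : β < 0) (hM : 0 ≤ M) :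
    ∃ K : ℝ, 0 ≤ K ∧ ∀ f0 f1 f2 f3 f4 g0 g1 g2 g3 g4 Hf Hg : ℝ → ℝ,
      AuxJet L β f0 f1 f2 f3 f4 → AuxJet L β g0 g1 g2 g3 g4 → (∀ x, |f2 x| ≤ M) →
      (∀ x, Tendsto (fun δ : ℝ => (1 / L) * ∫ s in δ..(L - δ),
        f3 (x - s) * Real.cot (π * s / L)) (𝓝[>] (0:ℝ)) (𝓝 (Hf x))) →
      (∀ x, Tendsto (fun δ : ℝ => (1 / L) * ∫ s in δ..(L - δ),
        g3 (x - s) * Real.cot (π * s / L)) (𝓝[>] (0:ℝ)) (𝓝 (Hg x))) →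
      ∫ x in (0:ℝ)..L, (f0 x - g0 x) *
        ((-(2 * π / L) * Hf x + auxG (f1 x) (f2 x) (f3 x) (f4 x))
          - (-(2 * π / L) * Hg x + auxG (g1 x) (g2 x) (g3 x) (g4 x)))
        ≤ K * ∫ x in (0:ℝ)..L, (f0 x - g0 x) ^ 2 := by
  have hp := Real.pi_pos
  set κ := - (3 * β / 2) with hκ
  have hκ0 : 0 < κ := by rw [hκ]; linarith
  obtain ⟨C, hC, hpair⟩ := aux_pair hL (ε := κ * L / (8 * π)) (by positivity)
  set D := (3 + 4 / β ^ 2) * M with hD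
  have hD0 : 0 ≤ D := by positivity
  set B := (2 * π / L) * C + D ^ 2 / κ with hB
  have hB0 : 0 ≤ B := by positivity
  set η := κ / (4 * (B + 1)) with hη
  have hη0 : 0 < η := by positivity
  refine ⟨B * (1 / (4 * η)), by positivity, ?_⟩
  intro f0 f1 f2 f3 f4 g0 g1 g2 g3 g4 Hf Hg jf jg hfM hHf hHg
  set w0 := fun x => f0 x - g0 x with hw0
  set w1 := fun x => f1 x - g1 x with hw1
  set w2 := fun x => f2 x - g2 x with hw2
  set w3 := fun x => f3 x - g3 x with hw3
  set w4 := fun x => f4 x - g4 x with hw4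
  have d0 : ∀ x, HasDerivAt w0 (w1 x) x := fun x => (jf.d0 x).sub (jg.d0 x)
  have d1 : ∀ x, HasDerivAt w1 (w2 x) x := fun x => (jf.d1 x).sub (jg.d1 x)
  have d2 : ∀ x, HasDerivAt w2 (w3 x) x := fun x => (jf.d2 x).sub (jg.d2 x)
  have d3 : ∀ x, HasDerivAt w3 (w4 x) x := fun x => (jf.d3 x).sub (jg.d3 x)
  have c4 : Continuous w4 := jf.c4.sub jg.c4
  have p0 : ∀ x, w0 (x + L) = w0 x := fun x => by simp only [hw0, jf.sh, jg.sh]; ring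
  have p1 := aux_per0 d0 p0
  have c0 := aux_cont d0
  have c1 := aux_cont d1
  have c2 := aux_cont d2
  -- Hilbert limit
  have hH : ∀ x, Tendsto (fun δ : ℝ => (1 / L) * ∫ s in δ..(L - δ),
        w3 (x - s) * Real.cot (π * s / L)) (𝓝[>] (0:ℝ)) (𝓝 (Hf x - Hg x)) := by
    intro x
    refine ((hHf x).sub (hHg x)).congr' ?_
    filter_upwards [Ioo_mem_nhdsGT (show (0:ℝ) < L / 2 by linarith)] with δ hδ
    obtain ⟨k, hk, hk'⟩ := aux_kernel hL hδ.1 hδ.2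
    have hle : δ ≤ L - δ := by linarith [hδ.2]
    have e : ∀ v : ℝ → ℝ, ∫ s in δ..(L - δ), v (x - s) * Real.cot (π * s / L)
        = ∫ s in δ..(L - δ), v (x - s) * k s := by
      intro v
      apply intervalIntegral.integral_congr
      intro s hs
      rw [Set.uIcc_of_le hle] at hs
      simp only [hk' s hs]
    have cf := jf.c3
    have cg := jg.c3
    rw [e, e, e, ← mul_sub, ← intervalIntegral.integral_sub
      (Continuous.intervalIntegrable (by fun_prop) _ _)
      (Continuous.intervalIntegrable (by fun_prop) _ _)]
    congr 2; ext s; simp only [hw3]; ring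
  have P := hpair w0 w1 w2 w3 w4 d0 d1 d2 d3 c4 p0 _ hH
  set a := ∫ x in (0:ℝ)..L, w2 x ^ 2 with ha
  set b := ∫ x in (0:ℝ)..L, w1 x ^ 2 with hb
  set e := ∫ x in (0:ℝ)..L, w0 x ^ 2 with he
  have a0 : 0 ≤ a := intervalIntegral.integral_nonneg hL.le fun x _ => by positivity
  have b0 : 0 ≤ b := intervalIntegral.integral_nonneg hL.le fun x _ => by positivity
  -- flux
  set Q := fun x => (3 * f1 x + (f1 x)⁻¹) * f2 x - (3 * g1 x + (g1 x)⁻¹) * g2 x with hQ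
  set Q1 := fun x => auxG1 (f1 x) (f2 x) (f3 x) - auxG1 (g1 x) (g2 x) (g3 x) with hQ1
  set Q2 := fun x => auxG (f1 x) (f2 x) (f3 x) (f4 x) - auxG (g1 x) (g2 x) (g3 x) (g4 x) with hQ2
  have dQ : ∀ x, HasDerivAt Q (Q1 x) x := fun x => (aux_flux1 hβ jf x).sub (aux_flux1 hβ jg x)
  have dQ1 : ∀ x, HasDerivAt Q1 (Q2 x) x := fun x => (aux_flux2 hβ jf x).sub (aux_flux2 hβ jg x)
  have nf : ∀ x, f1 x ≠ 0 := fun x h => by have := jf.sl x; linarith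
  have ng : ∀ x, g1 x ≠ 0 := fun x h => by have := jg.sl x; linarith
  have cQ2 : Continuous Q2 := by
    have := jf.c1; have := jf.c2; have := jf.c3; have := jf.c4
    have := jg.c1; have := jg.c2; have := jg.c3; have := jg.c4
    simp only [hQ2, auxG]
    fun_prop (disch := assumption)
  have pQ : ∀ x, Q (x + L) = Q x := fun x => by simp only [hQ, jf.p1, jf.p2, jg.p1, jg.p2]
  have pQ1 := aux_per0 dQ pQ
  have cQ1 := aux_cont dQ1
  have cQ := aux_cont dQ
  have F1 : ∫ x in (0:ℝ)..L, w0 x * Q2 x = ∫ x in (0:ℝ)..L, w2 x * Q x := by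
    rw [aux_ibp d0 dQ1 c1 cQ2 p0 pQ1, aux_ibp d1 dQ c2 cQ1 p1 pQ, neg_neg]
  have F2 : ∫ x in (0:ℝ)..L, w2 x * Q x ≤ ∫ x in (0:ℝ)..L,
      (-(3 / 4 * κ) * w2 x ^ 2 + D ^ 2 / κ * w1 x ^ 2) := by
    apply intervalIntegral.integral_mono_on hL.le
    · exact Continuous.intervalIntegrable (by fun_prop) _ _
    · exact Continuous.intervalIntegrable (by fun_prop) _ _
    · intro x _
      have s1 := jf.sl x
      have s2 := jg.sl x
      have e1 : Q x = (3 * g1 x + (g1 x)⁻¹) * w2 x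
          + (w1 x * (3 - (f1 x)⁻¹ * (g1 x)⁻¹)) * f2 x := by
        have := nf x; have := ng x
        simp only [hQ, hw1, hw2]
        field_simp
        ring
      have i1 : (g1 x)⁻¹ ≤ 0 := inv_nonpos.2 (by linarith)
      have i2 : 3 * g1 x + (g1 x)⁻¹ ≤ -κ := by rw [hκ]; linarith
      have i3 : |3 - (f1 x)⁻¹ * (g1 x)⁻¹| ≤ 3 + 4 / β ^ 2 := by
        have : β ^ 2 / 4 ≤ f1 x * g1 x := by nlinarith
        have hb4 : 0 < β ^ 2 / 4 := by nlinarith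
        have : (f1 x)⁻¹ * (g1 x)⁻¹ ≤ 4 / β ^ 2 := by
          rw [← mul_inv]
          calc (f1 x * g1 x)⁻¹ ≤ (β ^ 2 / 4)⁻¹ := inv_anti₀ hb4 this
            _ = _ := by rw [inv_div]
        have h0 : 0 ≤ (f1 x)⁻¹ * (g1 x)⁻¹ :=
          mul_nonneg_of_nonpos_of_nonpos (inv_nonpos.2 (by linarith)) i1
        rw [abs_le]; constructor <;> linarith
      have i4 : |(3 - (f1 x)⁻¹ * (g1 x)⁻¹) * f2 x| ≤ D := by
        rw [abs_mul, hD]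
        have := hfM x
        gcongr
      rw [e1]
      set y := (3 - (f1 x)⁻¹ * (g1 x)⁻¹) * f2 x with hy
      have y2 : y ^ 2 ≤ D ^ 2 := sq_le_sq' (by linarith [(abs_le.1 i4).1]) (abs_le.1 i4).2
      have e2 : w2 x * ((3 * g1 x + (g1 x)⁻¹) * w2 x
          + (w1 x * (3 - (f1 x)⁻¹ * (g1 x)⁻¹)) * f2 x)
          = (3 * g1 x + (g1 x)⁻¹) * w2 x ^ 2 + w2 x * (w1 x * y) := by rw [hy]; ring
      rw [e2]
      have i5 : (3 * g1 x + (g1 x)⁻¹) * w2 x ^ 2 ≤ -κ * w2 x ^ 2 := by gcongr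
      have i6 : w2 x * (w1 x * y) ≤ κ / 4 * w2 x ^ 2 + (w1 x * y) ^ 2 / κ := by
        have : κ / 4 * w2 x ^ 2 + (w1 x * y) ^ 2 / κ - w2 x * (w1 x * y)
          = (κ * w2 x - 2 * (w1 x * y)) ^ 2 / (4 * κ) := by field_simp; ring
        have h0 : 0 ≤ (κ * w2 x - 2 * (w1 x * y)) ^ 2 / (4 * κ) := by positivity
        linarith
      have i7 : (w1 x * y) ^ 2 / κ ≤ D ^ 2 / κ * w1 x ^ 2 := by
        rw [mul_pow, div_mul_eq_mul_div, mul_comm (D ^ 2)]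
        gcongr
      linarith
  rw [intervalIntegral.integral_add (Continuous.intervalIntegrable (by fun_prop) _ _)
      (Continuous.intervalIntegrable (by fun_prop) _ _), intervalIntegral.integral_const_mul,
      intervalIntegral.integral_const_mul, ← ha, ← hb] at F2
  -- interpolation
  have I : b ≤ η * a + (1 / (4 * η)) * e := by
    have y := aux_young hL c2 c0 p0 0 hη0
    have i := aux_ibp d0 d1 c1 c2 p0 p1
    have : ∫ x in (0:ℝ)..L, w2 x * w0 (x - 0) = ∫ x in (0:ℝ)..L, w0 x * w2 x := by
      congr 1; ext x; rw [sub_zero]; ring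
    rw [this, i, abs_neg] at y
    have : ∫ x in (0:ℝ)..L, w1 x * w1 x = b := by
      rw [hb]; congr 1; ext x; ring
    rw [this] at y
    exact (le_abs_self b).trans y
  -- split
  obtain ⟨N3, hN3, hN3'⟩ := aux_bdd hL c4 (aux_per0 d3 (aux_per0 d2 (aux_per0 d1 p1)))
  obtain ⟨N0, hN0, hN0'⟩ := aux_bdd hL c0 p0
  obtain ⟨mH, bH⟩ := aux_H hL hN3 (aux_cont d3) (aux_per0 d2 (aux_per0 d1 p1))
    (aux_lip d3 hN3') hH
  have iH : IntervalIntegrable (fun x => w0 x * (Hf x - Hg x)) volume 0 L := by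
    apply aux_bint (c0.measurable.mul mH) (N := N0 * (N3 * (L / π)))
    intro x
    rw [Pi.mul_apply, abs_mul]
    have := hN0' x; have := bH x
    gcongr
  have S : ∫ x in (0:ℝ)..L, (f0 x - g0 x) *
        ((-(2 * π / L) * Hf x + auxG (f1 x) (f2 x) (f3 x) (f4 x))
          - (-(2 * π / L) * Hg x + auxG (g1 x) (g2 x) (g3 x) (g4 x)))
      = -(2 * π / L) * (∫ x in (0:ℝ)..L, w0 x * (Hf x - Hg x)) + ∫ x in (0:ℝ)..L, w0 x * Q2 x := by
    rw [← intervalIntegral.integral_const_mul, ← intervalIntegral.integral_add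
      (iH.const_mul _) (Continuous.intervalIntegrable (by fun_prop) _ _)]
    congr 1; ext x; simp only [hw0, hQ2]; ring
  rw [S, F1]
  have X1 : -(2 * π / L) * (∫ x in (0:ℝ)..L, w0 x * (Hf x - Hg x))
      ≤ (2 * π / L) * (κ * L / (8 * π) * a + C * b) := by
    rw [neg_mul, ← mul_neg]
    have := (neg_le_abs _).trans P
    gcongr
  have X2 : (2 * π / L) * (κ * L / (8 * π) * a + C * b) = κ / 4 * a + (2 * π / L) * C * b := by
    field_simp
    try ring
  have X3 : B * b ≤ B * (η * a + (1 / (4 * η)) * e) := by gcongr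
  have X4 : B * η ≤ κ / 4 := by
    rw [hη]
    have : B * (κ / (4 * (B + 1))) = κ / 4 * (B / (B + 1)) := by field_simp
    rw [this]
    have : B / (B + 1) ≤ 1 := by rw [div_le_one (by linarith)]; linarith
    nlinarith
  have X5 : B * η * a ≤ κ / 4 * a := by gcongr
  have X6 : B * b = (2 * π / L) * C * b + D ^ 2 / κ * b := by rw [hB]; ring
  have X7 : 0 ≤ κ * a := by positivity
  have X8 : B * (η * a + (1 / (4 * η)) * e) = B * η * a + B * (1 / (4 * η)) * e := by ring
  linarith


lemma aux_jet {L T β : ℝ} {h H : ℝ → ℝ → ℝ} (s : IsStepPDESol L T β h H) {t : ℝ}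
    (ht : t ∈ Set.Icc (0:ℝ) T) :
    AuxJet L β (fun x => h x t) (deriv (fun z => h z t)) (iteratedDeriv 2 (fun z => h z t))
      (iteratedDeriv 3 (fun z => h z t)) (iteratedDeriv 4 (fun z => h z t)) := by
  have hc := s.1 t ht
  have key : ∀ m : ℕ, m < 4 → ∀ x, HasDerivAt (iteratedDeriv m (fun z => h z t))
      (iteratedDeriv (m+1) (fun z => h z t) x) x := by
    intro m hm x
    rw [iteratedDeriv_succ]
    apply DifferentiableAt.hasDerivAt
    exact hc.differentiable_iteratedDeriv m (by exact_mod_cast hm) x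
  refine ⟨?_, ?_, key 2 (by norm_num), key 3 (by norm_num), ?_, s.2.1 t ht, s.2.2.1 t ht⟩
  · intro x
    have := key 0 (by norm_num) x
    rwa [iteratedDeriv_zero, zero_add, iteratedDeriv_one] at this
  · intro x
    have := key 1 (by norm_num) x
    rwa [iteratedDeriv_one] at this
  · exact hc.continuous_iteratedDeriv 4 (by norm_num)

/-- right-hand side -/
noncomputable def auxR (L : ℝ) (h H : ℝ → ℝ → ℝ) (t x : ℝ) : ℝ :=
  -(2 * π / L) * H x t + auxG (deriv (fun z => h z t) x) (iteratedDeriv 2 (fun z => h z t) x)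
      (iteratedDeriv 3 (fun z => h z t) x) (iteratedDeriv 4 (fun z => h z t) x)

lemma aux_R {L T β : ℝ} (hβ : β < 0) {h H : ℝ → ℝ → ℝ} (s : IsStepPDESol L T β h H) {t : ℝ}
    (ht : t ∈ Set.Icc (0:ℝ) T) (x : ℝ) :
    HasDerivWithinAt (fun τ => h x τ) (auxR L h H t x) (Set.Icc 0 T) t := by
  have j := aux_jet s ht
  have e : iteratedDeriv 2
            (fun y => (3 * deriv (fun z => h z t) y + 1 / deriv (fun z => h z t) y)
              * iteratedDeriv 2 (fun z => h z t) y) x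
      = auxG (deriv (fun z => h z t) x) (iteratedDeriv 2 (fun z => h z t) x)
      (iteratedDeriv 3 (fun z => h z t) x) (iteratedDeriv 4 (fun z => h z t) x) := by
    simp only [one_div]
    have i2 : ∀ f : ℝ → ℝ, iteratedDeriv 2 f = deriv (deriv f) := by
      intro f
      rw [show (2:ℕ) = 1 + 1 from rfl, iteratedDeriv_succ, iteratedDeriv_one]
    refine (congrFun (i2 _) x).trans ?_
    have : deriv (fun y => (3 * deriv (fun z => h z t) y + (deriv (fun z => h z t) y)⁻¹)
              * iteratedDeriv 2 (fun z => h z t) y) = fun y => auxG1 (deriv (fun z => h z t) y) (iteratedDeriv 2 (fun z => h z t) y)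
      (iteratedDeriv 3 (fun z => h z t) y) := by
      ext y
      exact (aux_flux1 hβ j y).deriv
    exact (congrArg (fun f => deriv f x) this).trans (aux_flux2 hβ j x).deriv
  have := s.2.2.2.2.2 x t ht
  rw [e] at this
  exact this

/-- every jet: mean value point -/
lemma aux_rolle {L : ℝ} (hL : 0 < L) {f f' : ℝ → ℝ} {c : ℝ} (h : ∀ x, HasDerivAt f (f' x) x)
    (hp : ∀ x, f (x + L) = f x - c) : ∃ y, f' y = -c / L := by
  obtain ⟨y, hy, e⟩ := exists_hasDerivAt_eq_slope f f' hL (aux_cont h).continuousOn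
    (fun x _ => h x)
  refine ⟨y, ?_⟩
  have := hp 0
  rw [zero_add] at this
  rw [e, this]; ring

lemma aux_near {L N c : ℝ} (hL : 0 < L) (hN : 0 ≤ N) {f f' : ℝ → ℝ} (h : ∀ x, HasDerivAt f (f' x) x)
    (hN : ∀ x, |f' x| ≤ N) (hp : ∀ x, f (x + L) = f x) (hc : ∃ y, f y = c) (x : ℝ) :
    |f x - c| ≤ N * L := by
  obtain ⟨y, hy⟩ := hc
  have hP : Function.Periodic f L := hp
  obtain ⟨z, hz, e⟩ := hP.exists_mem_Ico hL x y
  rw [e, ← hy]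
  have := aux_lip h hN z y
  refine this.trans ?_
  gcongr
  rw [abs_of_nonneg (by linarith [hz.1])]; linarith [hz.2]

lemma aux_Rbound {L β : ℝ} (hL : 0 < L) (hβ : β < 0) (N : ℝ) (hN : 0 ≤ N) : ∃ N', 0 ≤ N' ∧
    ∀ (f0 f1 f2 f3 f4 H : ℝ → ℝ), AuxJet L β f0 f1 f2 f3 f4 → (∀ x, |f2 x| ≤ N) → (∀ x, |f4 x| ≤ N) →
    (∀ x, Tendsto (fun δ : ℝ => (1 / L) * ∫ s in δ..(L - δ), f3 (x - s) * Real.cot (π * s / L))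
      (𝓝[>] (0:ℝ)) (𝓝 (H x))) →
    ∀ x, |-(2 * π / L) * H x + auxG (f1 x) (f2 x) (f3 x) (f4 x)| ≤ N' := by
  set A := 1 / L + N * L with hA
  set B := 2 / (-β) with hB
  have hBp : 0 ≤ B := by rw [hB]; apply div_nonneg <;> linarith
  refine ⟨(2 * π / L) * (N * (L / π)) + (2 * B ^ 3 * N ^ 3 + 3 * (3 + B ^ 2) * N * (N * L)
    + (3 * A + B) * N), by positivity, ?_⟩
  intro f0 f1 f2 f3 f4 H j h2 h4 hH x
  have b3 : |f3 x| ≤ N * L := by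
    have := aux_near hL hN j.d3 h4 j.p3 (c := 0) (by
      obtain ⟨y, hy⟩ := aux_rolle hL j.d2 (c := 0) (by simpa using j.p2)
      exact ⟨y, by simpa using hy⟩) x
    simpa using this
  have b1 : |f1 x| ≤ A := by
    have := aux_near hL hN j.d1 h2 j.p1 (c := -1 / L) (aux_rolle hL j.d0 j.sh) x
    have e : f1 x = (f1 x - -1 / L) + -1 / L := by ring
    rw [e]
    refine (abs_add_le _ _).trans ?_
    rw [hA]
    have : |-1 / L| = 1 / L := by rw [abs_div, abs_neg, abs_one, abs_of_pos hL]
    linarith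
  have bi : |(f1 x)⁻¹| ≤ B := by
    have := j.sl x
    rw [abs_inv, hB, abs_of_neg (by linarith), show 2 / (-β) = ((-β) / 2)⁻¹ by rw [inv_div]]
    apply inv_anti₀ <;> linarith
  have bH := (aux_H hL hN j.c3 j.p3 (aux_lip j.d3 h4) hH).2 x
  have h2 := h2 x
  have h4 := h4 x
  refine (abs_add_le _ _).trans ?_
  apply add_le_add
  · rw [abs_mul, abs_neg, abs_of_pos (by positivity : 0 < 2 * π / L)]
    gcongr
  · unfold auxG
    refine (abs_add_le _ _).trans (add_le_add ((abs_add_le _ _).trans (add_le_add ?_ ?_)) ?_)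
    · rw [abs_mul, abs_mul, abs_pow, abs_pow, abs_two]; gcongr
    · rw [abs_mul, abs_mul, abs_mul, abs_of_pos (by norm_num : (0:ℝ) < 3)]
      have : |3 - (f1 x)⁻¹ ^ 2| ≤ 3 + B ^ 2 := by
        refine (abs_sub _ _).trans ?_
        rw [abs_of_pos (by norm_num : (0:ℝ) < 3), abs_pow]
        gcongr
      gcongr
    · rw [abs_mul]
      have : |3 * f1 x + (f1 x)⁻¹| ≤ 3 * A + B := by
        refine (abs_add_le _ _).trans ?_
        rw [abs_mul, abs_of_pos (by norm_num : (0:ℝ) < 3)]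
        gcongr
      gcongr

lemma aux_Rmeas {L β : ℝ} (hL : 0 < L) (hβ : β < 0) 
    {f0 f1 f2 f3 f4 H : ℝ → ℝ} (j : AuxJet L β f0 f1 f2 f3 f4) 
    (hH : ∀ x, Tendsto (fun δ : ℝ => (1 / L) * ∫ s in δ..(L - δ), f3 (x - s) * Real.cot (π * s / L))
      (𝓝[>] (0:ℝ)) (𝓝 (H x))) :
    Measurable fun x => -(2 * π / L) * H x + auxG (f1 x) (f2 x) (f3 x) (f4 x) := by
  obtain ⟨N, hN, h4⟩ := aux_bdd hL j.c4 j.p4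
  have := (aux_H hL hN j.c3 j.p3 (aux_lip j.d3 h4) hH).1
  have c1 := j.c1.measurable
  have c2 := j.c2.measurable
  have c3 := j.c3.measurable
  have c4 := j.c4.measurable
  unfold auxG
  fun_prop

lemma aux_Rall {L T β : ℝ} (hL : 0 < L) (hβ : β < 0) {h H : ℝ → ℝ → ℝ}
    (s : IsStepPDESol L T β h H) {t : ℝ} (ht : t ∈ Set.Icc (0:ℝ) T) :
    Measurable (auxR L h H t) ∧ ∃ N, ∀ x, |auxR L h H t x| ≤ N := by
  have j := aux_jet s ht
  refine ⟨aux_Rmeas hL hβ j (fun x => s.2.2.2.2.1 x t ht), ?_⟩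
  obtain ⟨N4, hN4, h4⟩ := aux_bdd hL j.c4 j.p4
  obtain ⟨N2, hN2, h2⟩ := aux_bdd hL j.c2 j.p2
  obtain ⟨N', _, h⟩ := aux_Rbound hL hβ (max N2 N4) (le_max_of_le_left hN2)
  exact ⟨N', h _ _ _ _ _ _ j (fun x => (h2 x).trans (le_max_left _ _))
    (fun x => (h4 x).trans (le_max_right _ _)) (fun x => s.2.2.2.2.1 x t ht)⟩


/-- second difference -/
def auxD (s : ℝ) (f : ℝ → ℝ) (x : ℝ) : ℝ := (f (x + s) - f x) - (f (x - s + s) - f (x - s))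

lemma aux_mv {f f' f'' : ℝ → ℝ} (h0 : ∀ x, HasDerivAt f (f' x) x) (h1 : ∀ x, HasDerivAt f' (f'' x) x)
    (x : ℝ) {s : ℝ} (hs : 0 < s) : ∃ ξ, |ξ - x| ≤ s ∧ auxD s f x = f'' ξ * s ^ 2 := by
  have hφ : ∀ y, HasDerivAt (fun y => f (y + s) - f y) (f' (y + s) - f' y) y := fun y =>
    ((h0 (y + s)).comp_add_const y s).sub (h0 y)
  obtain ⟨y, hy, e⟩ := exists_hasDerivAt_eq_slope _ _ (show x - s < x by linarith)
    (aux_cont hφ).continuousOn (fun y _ => hφ y)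
  obtain ⟨ξ, hξ, e'⟩ := exists_hasDerivAt_eq_slope f' f'' (show y < y + s by linarith)
    (aux_cont h1).continuousOn (fun y _ => h1 y)
  refine ⟨ξ, ?_, ?_⟩
  · rw [abs_le]; constructor <;> linarith [hy.1, hy.2, hξ.1, hξ.2]
  · unfold auxD
    rw [e', e]
    have : x - (x - s) = s := by ring
    have h2 : y + s - y = s := by ring
    rw [this, h2]
    field_simp

lemma aux_A2 {f f' f'' : ℝ → ℝ} (h0 : ∀ x, HasDerivAt f (f' x) x) (h1 : ∀ x, HasDerivAt f' (f'' x) x)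
    {N : ℝ} (hN : ∀ x, |f'' x| ≤ N) (x : ℝ) {s : ℝ} (hs : 0 < s) : |auxD s f x| ≤ N * s ^ 2 := by
  obtain ⟨ξ, _, e⟩ := aux_mv h0 h1 x hs
  rw [e, abs_mul, abs_of_nonneg (sq_nonneg s)]
  gcongr
  exact hN ξ

lemma aux_B2 {f f' f'' : ℝ → ℝ} (h0 : ∀ x, HasDerivAt f (f' x) x) (h1 : ∀ x, HasDerivAt f' (f'' x) x)
    (hc : Continuous f'') {N : ℝ} (hN : ∀ x s, 0 < s → |auxD s f x| ≤ N * s ^ 2) (x : ℝ) :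
    |f'' x| ≤ N := by
  by_contra! hlt
  have : ∀ᶠ y in 𝓝 x, N < |f'' y| := hc.abs.continuousAt.eventually (lt_mem_nhds hlt)
  obtain ⟨ε, hε, hb⟩ := Metric.eventually_nhds_iff.1 this
  obtain ⟨ξ, hξ, e⟩ := aux_mv h0 h1 x (half_pos hε)
  have h2 := hN x _ (half_pos hε)
  rw [e, abs_mul, abs_of_nonneg (sq_nonneg (ε / 2))] at h2
  have h3 := le_of_mul_le_mul_right h2 (by positivity)
  have := @hb ξ (by rw [Real.dist_eq]; linarith)
  linarith

lemma aux_Dd {f f' : ℝ → ℝ} (h0 : ∀ x, HasDerivAt f (f' x) x) (s : ℝ) :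
    ∀ x, HasDerivAt (auxD s f) (auxD s f' x) x := fun x =>
  (((h0 (x + s)).comp_add_const x s).sub (h0 x)).sub
    (HasDerivAt.sub (by
      have h1 := ((h0 (x - s + s)).comp_add_const (x - s) s).comp_sub_const x s
      exact h1) ((h0 (x - s)).comp_sub_const x s))

/-- uniform second/fourth difference bound -/
def auxK (N : ℝ) (f : ℝ → ℝ) : Prop :=
  (∀ x s, 0 < s → |auxD s f x| ≤ N * s ^ 2) ∧
  (∀ x s r, 0 < s → 0 < r → |auxD r (auxD s f) x| ≤ N * s ^ 2 * r ^ 2)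

lemma aux_K_intro {L β N : ℝ} {f0 f1 f2 f3 f4 : ℝ → ℝ} (j : AuxJet L β f0 f1 f2 f3 f4)
    (h2 : ∀ x, |f2 x| ≤ N) (h4 : ∀ x, |f4 x| ≤ N) : auxK N f0 := by
  refine ⟨fun x s hs => aux_A2 j.d0 j.d1 h2 x hs, fun x s r hs hr => ?_⟩
  exact aux_A2 (aux_Dd j.d0 s) (aux_Dd j.d1 s) (fun y => aux_A2 j.d2 j.d3 h4 y hs) x hr

lemma aux_K_elim {L β N : ℝ} {f0 f1 f2 f3 f4 : ℝ → ℝ} (j : AuxJet L β f0 f1 f2 f3 f4)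
    (k : auxK N f0) : (∀ x, |f2 x| ≤ N) ∧ (∀ x, |f4 x| ≤ N) := by
  refine ⟨aux_B2 j.d0 j.d1 j.c2 k.1, aux_B2 j.d2 j.d3 j.c4 fun x s hs => ?_⟩
  exact aux_B2 (aux_Dd j.d0 s) (aux_Dd j.d1 s) (aux_cont (aux_Dd j.d2 s))
    (fun x r hr => k.2 x s r hs hr) x

lemma aux_K_closed {h : ℝ → ℝ → ℝ} (hc : Continuous (fun p : ℝ × ℝ => h p.1 p.2)) (N : ℝ) :
    IsClosed {t | auxK N (fun x => h x t)} := by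
  have hx : ∀ x, Continuous (fun t => h x t) := fun x =>
    hc.comp (by fun_prop : Continuous fun t : ℝ => (x, t))
  unfold auxK
  simp only [Set.ofPred_and, Set.ofPred_forall, auxD]
  apply IsClosed.inter
  · refine isClosed_iInter fun x => isClosed_iInter fun s => isClosed_iInter fun _ => ?_
    apply isClosed_le <;> fun_prop
  · refine isClosed_iInter fun x => isClosed_iInter fun s => isClosed_iInter fun r =>
      isClosed_iInter fun _ => isClosed_iInter fun _ => ?_
    apply isClosed_le <;> fun_prop

lemma aux_K_ex {L T β : ℝ} (hL : 0 < L) {h H : ℝ → ℝ → ℝ}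
    (s : IsStepPDESol L T β h H) {t : ℝ} (ht : t ∈ Set.Icc (0:ℝ) T) :
    ∃ n : ℕ, auxK n (fun x => h x t) := by
  have j := aux_jet s ht
  obtain ⟨N4, hN4, h4⟩ := aux_bdd hL j.c4 j.p4
  obtain ⟨N2, hN2, h2⟩ := aux_bdd hL j.c2 j.p2
  obtain ⟨n, hn⟩ := exists_nat_ge (max N2 N4)
  exact ⟨n, aux_K_intro j (fun x => (h2 x).trans ((le_max_left _ _).trans hn))
    (fun x => (h4 x).trans ((le_max_right _ _).trans hn))⟩

lemma aux_K_R {L T β : ℝ} (hL : 0 < L) (hβ : β < 0) (N : ℝ) (hN : 0 ≤ N) : ∃ N', 0 ≤ N' ∧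
    ∀ {h H : ℝ → ℝ → ℝ} (_ : IsStepPDESol L T β h H) {t : ℝ} (_ : t ∈ Set.Icc (0:ℝ) T)
      (_ : auxK N (fun x => h x t)) (x : ℝ), |auxR L h H t x| ≤ N' := by
  obtain ⟨N', h0, h⟩ := aux_Rbound hL hβ N hN
  refine ⟨N', h0, fun {g H} s t ht k => ?_⟩
  have j := aux_jet s ht
  have := aux_K_elim j k
  exact h _ _ _ _ _ _ j this.1 this.2 (fun x => s.2.2.2.2.1 x t ht)


lemma aux_clip {k : ℝ} (hk : 0 < k) (y : ℝ) : |y - max (-k) (min k y)| ≤ y ^ 2 / k := by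
  rw [le_div_iff₀ hk]
  rcases le_total y k with h | h
  · rw [min_eq_right h]
    rcases le_total (-k) y with h' | h'
    · rw [max_eq_right h']; simp; positivity
    · rw [max_eq_left h', abs_of_nonpos (by linarith)]; nlinarith
  · rw [min_eq_left h, max_eq_right (by linarith), abs_of_nonneg (by linarith)]; nlinarith

lemma aux_vitali {ι : Type*} {l : Filter ι} [l.IsCountablyGenerated] {L N C : ℝ} (hL : 0 < L)
    (hC0 : 0 ≤ C)
    {q : ι → ℝ → ℝ} (hq : ∀ i, Continuous (q i)) {F φ : ℝ → ℝ} (hφ : Continuous φ)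
    (mF : Measurable F) (bF : ∀ x, |F x| ≤ N) (hlim : ∀ x, Tendsto (fun i => q i x) l (𝓝 (F x)))
    (hC : ∀ᶠ i in l, ∫ x in (0:ℝ)..L, q i x ^ 2 ≤ C) :
    Tendsto (fun i => ∫ x in (0:ℝ)..L, φ x * q i x) l (𝓝 (∫ x in (0:ℝ)..L, φ x * F x)) := by
  obtain ⟨Φ, hΦ⟩ := (isCompact_Icc (a := (0:ℝ)) (b := L)).exists_bound_of_continuousOn
    hφ.continuousOn
  have hΦ0 : 0 ≤ Φ := (norm_nonneg _).trans (hΦ 0 ⟨le_rfl, hL.le⟩)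
  have hN0 : 0 ≤ N := (abs_nonneg _).trans (bF 0)
  rw [Metric.tendsto_nhds]
  intro η hη
  set k := N + 2 * Φ * C / η + 1 with hk
  have hk0 : 0 < k := by positivity
  have hkN : N ≤ k := by
    have : 0 ≤ 2 * Φ * C / η := by positivity
    linarith
  have hkη : Φ * C / k < η / 2 := by
    rw [div_lt_iff₀ hk0, hk]
    have : η / 2 * (2 * Φ * C / η) = Φ * C := by field_simp
    nlinarith
  let c : ℝ → ℝ := fun y => max (-k) (min k y)
  have cc : Continuous c := by fun_prop
  have cF : ∀ x, c (F x) = F x := by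
    intro x
    have := abs_le.1 (bF x)
    simp only [c]
    rw [min_eq_right (by linarith), max_eq_right (by linarith)]
  have cb : ∀ y, |c y| ≤ k := by
    intro y
    rw [abs_le]
    exact ⟨le_max_left _ _, max_le (by linarith) (min_le_left _ _)⟩
  have D : Tendsto (fun i => ∫ x in (0:ℝ)..L, φ x * c (q i x)) l
      (𝓝 (∫ x in (0:ℝ)..L, φ x * F x)) := by
    apply intervalIntegral.tendsto_integral_filter_of_dominated_convergence (fun _ => Φ * k)
    · refine Eventually.of_forall fun i => Continuous.aestronglyMeasurable ?_
      exact hφ.mul (cc.comp (hq i))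
    · refine Eventually.of_forall fun i => Eventually.of_forall fun x hx => ?_
      rw [Set.uIoc_of_le hL.le] at hx
      rw [norm_mul]
      exact mul_le_mul (hΦ x ⟨hx.1.le, hx.2⟩) (cb _) (abs_nonneg _) hΦ0
    · simp
    · refine Eventually.of_forall fun x _ => ?_
      have := (cc.tendsto (F x)).comp (hlim x)
      rw [cF] at this
      exact this.const_mul _
  filter_upwards [(Metric.tendsto_nhds.1 D) (η / 2) (by positivity), hC] with i hi hCi
  rw [Real.dist_eq] at *
  have hcq : Continuous fun x => c (q i x) := cc.comp (hq i)
  have e : (∫ x in (0:ℝ)..L, φ x * q i x) - (∫ x in (0:ℝ)..L, φ x * c (q i x))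
      = ∫ x in (0:ℝ)..L, φ x * (q i x - c (q i x)) := by
    rw [← intervalIntegral.integral_sub]
    · congr 1; ext x; ring
    · exact (hφ.mul (hq i)).intervalIntegrable _ _
    · exact (hφ.mul hcq).intervalIntegrable _ _
  have b : |∫ x in (0:ℝ)..L, φ x * (q i x - c (q i x))| ≤ Φ * C / k := by
    calc _ ≤ ∫ x in (0:ℝ)..L, |φ x * (q i x - c (q i x))| :=
          intervalIntegral.abs_integral_le_integral_abs hL.le
      _ ≤ ∫ x in (0:ℝ)..L, (Φ / k) * q i x ^ 2 := by
          apply intervalIntegral.integral_mono_on hL.le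
          · exact ((hφ.mul ((hq i).sub hcq)).abs).intervalIntegrable _ _
          · exact (continuous_const.mul ((hq i).pow 2)).intervalIntegrable _ _
          · intro x hx
            rw [abs_mul]
            calc _ ≤ Φ * (q i x ^ 2 / k) := 
                  mul_le_mul (hΦ x hx) (aux_clip hk0 _) (abs_nonneg _) hΦ0
              _ = _ := by ring
      _ = (Φ / k) * ∫ x in (0:ℝ)..L, q i x ^ 2 := intervalIntegral.integral_const_mul _ _
      _ ≤ (Φ / k) * C := by gcongr
      _ = _ := by ring
  rw [← e] at b
  rw [abs_lt] at *
  rw [abs_le] at b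
  constructor <;> linarith [hi.1, hi.2, b.1, b.2]

lemma aux_E_cont {w : ℝ → ℝ → ℝ} (hw : Continuous (fun p : ℝ × ℝ => w p.1 p.2)) {g : ℝ → ℝ}
    (hg : Continuous g) (L : ℝ) : Continuous fun t => ∫ x in (0:ℝ)..L, (w x t - g x) ^ 2 := by
  apply intervalIntegral.continuous_parametric_intervalIntegral_of_continuous'
  have : Continuous fun p : ℝ × ℝ => w p.2 p.1 := hw.comp continuous_swap
  exact (this.sub (hg.comp continuous_snd)).pow 2

lemma aux_deriv {L N C : ℝ} (hL : 0 < L) (hC0 : 0 ≤ C) {w : ℝ → ℝ → ℝ}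
    (hw : Continuous (fun p : ℝ × ℝ => w p.1 p.2)) {g : ℝ → ℝ}
    (hg : Continuous g) {t : ℝ} {F : ℝ → ℝ} (hF : ∀ x, HasDerivWithinAt (w x) (F x) (Set.Ici t) t)
    (mF : Measurable F) (bF : ∀ x, |F x| ≤ N)
    (hC : ∀ᶠ t' in 𝓝[>] t, ∫ x in (0:ℝ)..L, (w x t' - w x t) ^ 2 ≤ C * (t' - t) ^ 2) :
    HasDerivWithinAt (fun t' => ∫ x in (0:ℝ)..L, (w x t' - g x) ^ 2)
      (2 * ∫ x in (0:ℝ)..L, (w x t - g x) * F x) (Set.Ici t) t := by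
  have hwt : ∀ t, Continuous fun x => w x t := fun t =>
    hw.comp (by fun_prop : Continuous fun x : ℝ => (x, t))
  rw [hasDerivWithinAt_iff_tendsto_slope]
  rw [show Set.Ici t \ {t} = Set.Ioi t from Set.Ici_sdiff_left]
  have hmem : ∀ᶠ t' in 𝓝[>] t, t < t' := self_mem_nhdsWithin
  have hC' : ∀ᶠ t' in 𝓝[>] t, ∫ x in (0:ℝ)..L, ((w x t' - w x t) / (t' - t)) ^ 2 ≤ C := by
    filter_upwards [hC, hmem] with t' h h'
    simp only [div_pow]
    rw [intervalIntegral.integral_div, div_le_iff₀ (by have := sub_pos.2 h'; positivity)]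
    exact h
  have V := aux_vitali (l := 𝓝[>] t) (q := fun t' x => (w x t' - w x t) / (t' - t)) hL hC0
    (fun t' => ((hwt t').sub (hwt t)).div_const _) (φ := fun x => w x t - g x) ((hwt t).sub hg) mF bF (by
      intro x
      have := hF x
      rw [hasDerivWithinAt_iff_tendsto_slope,
        show Set.Ici t \ {t} = Set.Ioi t from Set.Ici_sdiff_left] at this
      refine this.congr fun t' => ?_
      rw [slope_def_field]) hC'
  have Z : Tendsto (fun t' => (t' - t) * ∫ x in (0:ℝ)..L, ((w x t' - w x t) / (t' - t)) ^ 2)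
      (𝓝[>] t) (𝓝 0) := by
    have z : Tendsto (fun t' => (t' - t) * C) (𝓝[>] t) (𝓝 0) := by
      have : Tendsto (fun t' => (t' - t) * C) (𝓝 t) (𝓝 ((t - t) * C)) := by
        apply Continuous.tendsto (f := fun t' : ℝ => (t' - t) * C); fun_prop
      rw [sub_self, zero_mul] at this
      exact this.mono_left nhdsWithin_le_nhds
    apply squeeze_zero' _ _ z
    · filter_upwards [hmem] with t' h'
      apply mul_nonneg (by linarith)
      exact intervalIntegral.integral_nonneg hL.le fun x _ => sq_nonneg _
    · filter_upwards [hmem, hC'] with t' h' h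
      exact mul_le_mul_of_nonneg_left h (by linarith)
  have := (V.const_mul 2).add Z
  rw [add_zero] at this
  refine this.congr' ?_
  filter_upwards [hmem] with t' h'
  have hne : t' - t ≠ 0 := by have := sub_pos.2 h'; positivity
  rw [slope_def_field, eq_div_iff hne, ← intervalIntegral.integral_sub,
    ← intervalIntegral.integral_const_mul, ← intervalIntegral.integral_const_mul,
    ← intervalIntegral.integral_add, ← intervalIntegral.integral_mul_const]
  · congr 1; ext x; field_simp; ring
  all_goals
    apply Continuous.intervalIntegrable
    have := hwt t
    have := hwt t'
    fun_prop


/-- quadratic right-increment control at a time -/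
def auxReg (L : ℝ) (h : ℝ → ℝ → ℝ) (s : ℝ) : Prop :=
  ∃ C, 0 ≤ C ∧ ∀ᶠ t' in 𝓝[>] s, ∫ x in (0:ℝ)..L, (h x t' - h x s) ^ 2 ≤ C * (t' - s) ^ 2

lemma aux_R_Ici {L T β : ℝ} (hβ : β < 0) {h H : ℝ → ℝ → ℝ} (s : IsStepPDESol L T β h H) {t : ℝ}
    (ht : t ∈ Set.Ico (0:ℝ) T) (x : ℝ) :
    HasDerivWithinAt (h x) (auxR L h H t x) (Set.Ici t) t := by
  have := aux_R hβ s ⟨ht.1, ht.2.le⟩ x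
  have h2 := this.mono (Set.Icc_subset_Icc_left ht.1)
  refine h2.mono_of_mem_nhdsWithin ?_
  exact Icc_mem_nhdsGE ht.2

lemma aux_gron {f f' : ℝ → ℝ} {a b K ε : ℝ} (hf : Continuous f)
    (hf' : ∀ x ∈ Set.Ico a b, HasDerivWithinAt f (f' x) (Set.Ici x) x)
    (hb : ∀ x ∈ Set.Ico a b, f' x ≤ K * f x + ε) :
    ∀ x ∈ Set.Icc a b, f x ≤ gronwallBound (f a) K ε (x - a) := by
  apply le_gronwallBound_of_liminf_deriv_right_le hf.continuousOn _ le_rfl hb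
  intro x hx r hr
  have := (hf' x hx).liminf_right_slope_le hr
  refine this.mono fun z hz => ?_
  rwa [slope_def_field, div_eq_inv_mul] at hz

lemma aux_int_R {L T β : ℝ} (hL : 0 < L) (hβ : β < 0) {h H : ℝ → ℝ → ℝ}
    (s : IsStepPDESol L T β h H) {t : ℝ} (ht : t ∈ Set.Icc (0:ℝ) T) {φ : ℝ → ℝ}
    (hφ : Continuous φ) : IntervalIntegrable (fun x => φ x * auxR L h H t x) volume 0 L := by
  obtain ⟨m, N, hN⟩ := aux_Rall hL hβ s ht
  have : IntervalIntegrable (auxR L h H t) volume 0 L := aux_bint m hN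
  exact this.continuousOn_mul hφ.continuousOn

lemma aux_gap {L T β N : ℝ} (hL : 0 < L) (hβ : β < 0) (hN : 0 ≤ N) : ∃ C, 0 ≤ C ∧
    ∀ {h H : ℝ → ℝ → ℝ} (_ : IsStepPDESol L T β h H) {c t : ℝ} (_ : 0 ≤ c) (_ : c < t) (_ : t ≤ T)
      (_ : t - c ≤ 1) (_ : auxK N (fun x => h x c)) (_ : ∀ s ∈ Set.Ioo c t, auxReg L h s),
      ∫ x in (0:ℝ)..L, (h x t - h x c) ^ 2 ≤ C * (t - c) ^ 2 := by
  obtain ⟨K, hK, hst⟩ := aux_static hL hβ hN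
  obtain ⟨N', hN', hR⟩ := aux_K_R (T := T) hL hβ N hN
  refine ⟨N' ^ 2 * L * exp (2 * K + 1), by positivity, ?_⟩
  intro h H s c t hc hct htT hct1 hk hreg
  have hcI : c ∈ Set.Icc (0:ℝ) T := ⟨hc, by linarith⟩
  have hcont := s.2.2.2.1
  have hwt : ∀ t, Continuous fun x => h x t := fun t =>
    hcont.comp (by fun_prop : Continuous fun x : ℝ => (x, t))
  set τ := t - c with hτ
  have hτ0 : 0 < τ := by rw [hτ]; linarith
  set E : ℝ → ℝ := fun s => ∫ x in (0:ℝ)..L, (h x s - h x c) ^ 2 with hE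
  have cE : Continuous E := aux_E_cont hcont (hwt c) L
  have dE : ∀ s ∈ Set.Ioo c t, HasDerivWithinAt E
      (2 * ∫ x in (0:ℝ)..L, (h x s - h x c) * auxR L h H s x) (Set.Ici s) s := by
    intro r hr
    have hrI : r ∈ Set.Ico (0:ℝ) T := ⟨by linarith [hr.1], by linarith [hr.2]⟩
    obtain ⟨m, N1, hN1⟩ := aux_Rall hL hβ s ⟨hrI.1, hrI.2.le⟩
    obtain ⟨C, hC0, hC⟩ := hreg r hr
    exact aux_deriv hL hC0 hcont (hwt c) (aux_R_Ici hβ s hrI) m hN1 hC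
  have bE : ∀ s ∈ Set.Ioo c t, 2 * ∫ x in (0:ℝ)..L, (h x s - h x c) * auxR L h H s x
      ≤ (2 * K + 1 / τ) * E s + τ * N' ^ 2 * L := by
    intro r hr
    have hrI : r ∈ Set.Icc (0:ℝ) T := ⟨by linarith [hr.1], by linarith [hr.2]⟩
    have st := hst _ _ _ _ _ _ _ _ _ _ _ _ (aux_jet s hcI) (aux_jet s hrI)
      (aux_K_elim (aux_jet s hcI) hk).1 (fun x => s.2.2.2.2.1 x c hcI)
      (fun x => s.2.2.2.2.1 x r hrI)
    have st' : ∫ x in (0:ℝ)..L, (h x c - h x r) * (auxR L h H c x - auxR L h H r x)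
      ≤ K * ∫ x in (0:ℝ)..L, (h x c - h x r) ^ 2 := st
    have e1 : ∫ x in (0:ℝ)..L, (h x c - h x r) ^ 2 = E r := by
      simp only [hE]; congr 1; ext x; ring
    rw [e1] at st'
    have φc : Continuous fun x => h x r - h x c := (hwt r).sub (hwt c)
    have i1 := aux_int_R hL hβ s hcI φc
    have i2 := aux_int_R hL hβ s hrI φc
    have e2 : ∫ x in (0:ℝ)..L, (h x c - h x r) * (auxR L h H c x - auxR L h H r x)
        = (∫ x in (0:ℝ)..L, (h x r - h x c) * auxR L h H r x)
          - ∫ x in (0:ℝ)..L, (h x r - h x c) * auxR L h H c x := by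
      rw [← intervalIntegral.integral_sub i2 i1]
      congr 1; ext x; ring
    rw [e2] at st'
    have b : ∫ x in (0:ℝ)..L, (h x r - h x c) * auxR L h H c x
        ≤ ∫ x in (0:ℝ)..L, ((1 / (2 * τ)) * (h x r - h x c) ^ 2 + τ * N' ^ 2 / 2) := by
      apply intervalIntegral.integral_mono_on hL.le i1
      · exact (by fun_prop : Continuous fun x => (1 / (2 * τ)) * (h x r - h x c) ^ 2 + τ * N' ^ 2 / 2).intervalIntegrable _ _
      · intro x _
        have hb := hR s hcI hk x
        have h1 : auxR L h H c x ^ 2 ≤ N' ^ 2 := sq_le_sq' (abs_le.1 hb).1 (abs_le.1 hb).2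
        have h2 : 0 ≤ ((h x r - h x c) - τ * auxR L h H c x) ^ 2 / (2 * τ) := by positivity
        have h3 : ((h x r - h x c) - τ * auxR L h H c x) ^ 2 / (2 * τ)
          = (1 / (2 * τ)) * (h x r - h x c) ^ 2 - (h x r - h x c) * auxR L h H c x
            + τ * auxR L h H c x ^ 2 / 2 := by field_simp; ring
        rw [h3] at h2
        have h4 : τ * auxR L h H c x ^ 2 / 2 ≤ τ * N' ^ 2 / 2 := by gcongr
        linarith
    rw [intervalIntegral.integral_add, intervalIntegral.integral_const_mul] at b
    rotate_left
    · exact (by fun_prop : Continuous fun x => (1 / (2 * τ)) * (h x r - h x c) ^ 2).intervalIntegrable _ _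
    · exact continuous_const.intervalIntegrable _ _
    have b' : ∫ x in (0:ℝ)..L, (h x r - h x c) * auxR L h H c x
        ≤ 1 / (2 * τ) * E r + L * (τ * N' ^ 2 / 2) := by
      rw [intervalIntegral.integral_const, smul_eq_mul, sub_zero] at b
      exact b
    have e3 : (2 * K + 1 / τ) * E r + τ * N' ^ 2 * L
      = 2 * (K * E r + (1 / (2 * τ) * E r + L * (τ * N' ^ 2 / 2))) := by field_simp; ring
    rw [e3]; linarith
  set K' := 2 * K + 1 / τ with hK'
  have hK'0 : 0 < K' := by positivity
  have G : ∀ c' ∈ Set.Ioo c t, E t ≤ E c' * exp (K' * (t - c'))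
      + τ * N' ^ 2 * L / K' * (exp (K' * (t - c')) - 1) := by
    intro c' hc'
    have := aux_gron (a := c') (b := t) cE (fun x hx => dE x ⟨hc'.1.trans_le hx.1, hx.2⟩)
      (fun x hx => bE x ⟨hc'.1.trans_le hx.1, hx.2⟩) t ⟨hc'.2.le, le_rfl⟩
    rwa [gronwallBound_of_K_ne_0 hK'0.ne'] at this
  have E0 : E c = 0 := by simp [hE]
  have lim : Tendsto (fun c' => E c' * exp (K' * (t - c'))
      + τ * N' ^ 2 * L / K' * (exp (K' * (t - c')) - 1)) (𝓝[>] c) (𝓝 (E c * exp (K' * (t - c))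
      + τ * N' ^ 2 * L / K' * (exp (K' * (t - c)) - 1))) := by
    apply Tendsto.mono_left _ nhdsWithin_le_nhds
    apply Continuous.tendsto (f := fun c' => E c' * exp (K' * (t - c'))
      + τ * N' ^ 2 * L / K' * (exp (K' * (t - c')) - 1))
    fun_prop
  have fin := ge_of_tendsto lim (by
    filter_upwards [Ioo_mem_nhdsGT hct] with c' hc'
    exact G c' hc')
  rw [E0, zero_mul, zero_add, ← hτ] at fin
  have k1 : K' * τ ≤ 2 * K + 1 := by
    rw [hK', add_mul, one_div, inv_mul_cancel₀ hτ0.ne']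
    nlinarith
  have k2 : 1 / K' ≤ τ := by
    rw [div_le_iff₀ hK'0, hK', mul_add, mul_one_div_cancel hτ0.ne']
    have : 0 ≤ τ * (2 * K) := by positivity
    linarith
  change E t ≤ _
  calc E t ≤ τ * N' ^ 2 * L / K' * (exp (K' * τ) - 1) := fin
    _ = (τ * N' ^ 2 * L) * (1 / K') * (exp (K' * τ) - 1) := by ring
    _ ≤ (τ * N' ^ 2 * L) * τ * (exp (2 * K + 1)) := by
        apply mul_le_mul
        · gcongr
        · have := exp_le_exp.2 k1; linarith
        · have := one_le_exp (show 0 ≤ K' * τ by positivity); linarith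
        · positivity
    _ = _ := by ring


lemma aux_perx {g g' φ : ℝ → ℝ} {Z : Set ℝ} {z z' N : ℝ} (hg : Continuous g) (hZ : IsClosed Z)
    (hz : z ∈ Z) (hz' : z' ∈ Z) (hzz : z ≤ z')
    (hd : ∀ s ∈ Z, s ∈ Set.Ico z z' → HasDerivWithinAt g (g' s) (Set.Ici s) s ∧ |g' s| ≤ N)
    (hφ : IntervalIntegrable φ volume z z') (hφ0 : ∀ τ, 0 ≤ φ τ)
    (hgap : ∀ c d, c ∈ Z → d ∈ Z → z ≤ c → c < d → d ≤ z' → (∀ y ∈ Set.Ioo c d, y ∉ Z) →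
      |g d - g c| ≤ ∫ τ in c..d, φ τ) (hN : 0 ≤ N) :
    |g z' - g z| ≤ N * (z' - z) + ∫ τ in z..z', φ τ := by
  have hsub : ∀ a b, z ≤ a → a ≤ b → b ≤ z' → IntervalIntegrable φ volume a b := by
    intro a b h1 h2 h3
    apply hφ.mono_set
    rw [Set.uIcc_of_le hzz, Set.uIcc_of_le h2]
    exact Set.Icc_subset_Icc h1 h3
  have main : ∀ ε > 0, |g z' - g z| ≤ (N + ε) * (z' - z) + ∫ τ in z..z', φ τ := by
    intro ε hε
    have cΦ : ContinuousOn (fun s => ∫ τ in z..s, φ τ) (Set.Icc z z') := by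
      have := intervalIntegral.continuousOn_primitive_interval' hφ (a := z) (by simp)
      rwa [Set.uIcc_of_le hzz] at this
    let S : Set ℝ := (Z ∩ Set.Icc z z') ∩
      {s | |g s - g z| ≤ (N + ε) * (s - z) + ∫ τ in z..s, φ τ}
    have hSc : IsCompact S := by
      have c1 : ContinuousOn (fun s => |g s - g z|) (Set.Icc z z') := by fun_prop
      have c2 : ContinuousOn (fun s => (N + ε) * (s - z)) (Set.Icc z z') := by fun_prop
      have h1 := isClosed_Icc.isClosed_le c1 (c2.add cΦ)
      have : S = Set.Icc z z' ∩ (Z ∩ {s | s ∈ Set.Icc z z' ∧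
        (fun s => |g s - g z|) s ≤ ((fun s => (N + ε) * (s - z)) + fun s => ∫ τ in z..s, φ τ) s}) := by
        ext s; simp only [S, Set.mem_inter_iff, Set.mem_ofPred_eq, Pi.add_apply]; tauto
      rw [this]
      exact isCompact_Icc.inter_right (hZ.inter h1)
    have hSne : S.Nonempty := ⟨z, ⟨hz, le_rfl, hzz⟩, by simp⟩
    obtain ⟨s, hsS, hmax⟩ := hSc.exists_isGreatest hSne
    obtain ⟨⟨hsZ, hs1, hs2⟩, hs3⟩ := hsS
    rcases hs2.eq_or_lt with rfl | hlt
    · exact hs3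
    exfalso
    simp only [Set.mem_ofPred_eq] at hs3
    -- extension step
    have ext : ∀ d ∈ Z, s < d → d ≤ z' → |g d - g s| ≤ (N + ε) * (d - s) + ∫ τ in s..d, φ τ →
        False := by
      intro d hdZ hsd hdz hb
      have : d ∈ S := by
        refine ⟨⟨hdZ, hs1.trans hsd.le, hdz⟩, ?_⟩
        simp only [Set.mem_ofPred_eq]
        have e := intervalIntegral.integral_add_adjacent_intervals (hsub z s le_rfl hs1 hs2)
          (hsub s d hs1 hsd.le hdz)
        have := abs_sub_le (g d) (g s) (g z)
        linarith
      have := hmax this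
      linarith
    obtain ⟨hds, hbs⟩ := hd s hsZ ⟨hs1, hlt⟩
    have ev : ∀ᶠ y in 𝓝[>] s, |g y - g s| ≤ (N + ε) * (y - s) := by
      rw [hasDerivWithinAt_iff_tendsto_slope,
        show Set.Ici s \ {s} = Set.Ioi s from Set.Ici_sdiff_left] at hds
      have := hds.abs.eventually (gt_mem_nhds (show |g' s| < N + ε by linarith))
      filter_upwards [this, self_mem_nhdsWithin] with y hy hy'
      have hy' : 0 < y - s := sub_pos.2 hy'
      rw [slope_def_field, abs_div, abs_of_pos hy', div_lt_iff₀ hy'] at hy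
      exact hy.le
    obtain ⟨u, hu, hU⟩ := mem_nhdsGT_iff_exists_Ioo_subset.1 ev
    have hu : s < u := hu
    by_cases hne : ∃ d ∈ Z, s < d ∧ d < u ∧ d ≤ z'
    · obtain ⟨d, hdZ, h1, h2, h3⟩ := hne
      apply ext d hdZ h1 h3
      have a := hU ⟨h1, h2⟩
      simp only [Set.mem_ofPred_eq] at a
      have b : 0 ≤ ∫ τ in s..d, φ τ := intervalIntegral.integral_nonneg h1.le fun x _ => hφ0 x
      linarith
    · push Not at hne
      have huz : u ≤ z' := by
        by_contra! hh
        have := hne z' hz' hlt hh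
        linarith
      obtain ⟨d, ⟨hdZ, hd1, hd2⟩, hmin⟩ := (isCompact_Icc.inter_left hZ : IsCompact (Z ∩ Set.Icc u z')).exists_isLeast
        ⟨z', hz', huz, le_rfl⟩
      apply ext d hdZ (hu.trans_le hd1) hd2
      have := hgap s d hsZ hdZ hs1 (hu.trans_le hd1) hd2 (by
        intro y hy hyZ
        by_cases hyu : y < u
        · have := hne y hyZ hy.1 hyu; linarith [hy.2]
        · have := hmin ⟨hyZ, not_lt.1 hyu, hy.2.le.trans hd2⟩
          linarith [hy.2])
      have : 0 ≤ (N + ε) * (d - s) := mul_nonneg (by linarith) (by linarith)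
      linarith
  apply le_of_forall_pos_le_add
  intro ε hε
  have := main (ε / (z' - z + 1)) (by have : 0 ≤ z' - z := by linarith
                                      positivity)
  have h2 : ε / (z' - z + 1) * (z' - z) ≤ ε := by
    rw [div_mul_eq_mul_div, div_le_iff₀ (by linarith)]
    nlinarith
  linarith

lemma aux_cs {m : ℝ → ℝ} {a b : ℝ} (hab : a < b) (h1 : IntervalIntegrable m volume a b)
    (h2 : IntervalIntegrable (fun x => m x ^ 2) volume a b) :
    (∫ x in a..b, m x) ^ 2 ≤ (b - a) * ∫ x in a..b, m x ^ 2 := by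
  set A := ∫ x in a..b, m x with hA
  set l := b - a with hl
  have hl0 : 0 < l := by rw [hl]; linarith
  have h : 0 ≤ ∫ x in a..b, (l * m x - A) ^ 2 :=
    intervalIntegral.integral_nonneg hab.le fun x _ => sq_nonneg _
  have e : ∫ x in a..b, (l * m x - A) ^ 2 = l ^ 2 * (∫ x in a..b, m x ^ 2) - l * A ^ 2 := by
    have : (fun x => (l * m x - A) ^ 2) = fun x => (l ^ 2 * m x ^ 2 - (2 * l * A) * m x) + A ^ 2 := by
      ext x; ring
    rw [this, intervalIntegral.integral_add, intervalIntegral.integral_sub,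
      intervalIntegral.integral_const_mul, intervalIntegral.integral_const_mul,
      intervalIntegral.integral_const, ← hA, smul_eq_mul, ← hl]
    · ring
    · exact h2.const_mul _
    · exact h1.const_mul _
    · exact (h2.const_mul _).sub (h1.const_mul _)
    · exact continuous_const.intervalIntegrable _ _
  rw [e] at h
  have : 0 ≤ l * (l * (∫ x in a..b, m x ^ 2) - A ^ 2) := by linarith
  have := nonneg_of_mul_nonneg_right this hl0
  linarith


lemma aux_Z {L N C : ℝ} (hL : 0 < L) (hN : 0 ≤ N) (hC0 : 0 ≤ C) {h F : ℝ → ℝ → ℝ}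
    (hc : Continuous (fun p : ℝ × ℝ => h p.1 p.2)) {Z : Set ℝ} (hZ : IsClosed Z) {z z' : ℝ}
    (hz : z ∈ Z) (hz' : z' ∈ Z) (hzz : z < z')
    (hd : ∀ s ∈ Z, s ∈ Set.Ico z z' → ∀ x, HasDerivWithinAt (h x) (F s x) (Set.Ici s) s ∧ |F s x| ≤ N)
    (hgap : ∀ c d, c ∈ Z → d ∈ Z → z ≤ c → c < d → d ≤ z' → (∀ y ∈ Set.Ioo c d, y ∉ Z) →
      ∫ x in (0:ℝ)..L, (h x d - h x c) ^ 2 ≤ C * (d - c) ^ 2) :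
    ∫ x in (0:ℝ)..L, (h x z' - h x z) ^ 2 ≤ (2 * N ^ 2 * L + 2 * C) * (z' - z) ^ 2 := by
  have hwt : ∀ t, Continuous fun x => h x t := fun t =>
    hc.comp (by fun_prop : Continuous fun x : ℝ => (x, t))
  have hxt : ∀ x, Continuous (h x) := fun x =>
    hc.comp (by fun_prop : Continuous fun t : ℝ => (x, t))
  let c : ℝ → ℝ := fun τ => sSup (Z ∩ Set.Icc z (max z τ))
  let d : ℝ → ℝ := fun τ => sInf (Z ∩ Set.Icc (min z' τ) z')
  have gc : ∀ τ, IsGreatest (Z ∩ Set.Icc z (max z τ)) (c τ) := fun τ =>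
    (isCompact_Icc.inter_left hZ).isGreatest_sSup ⟨z, hz, le_rfl, le_max_left _ _⟩
  have ld : ∀ τ, IsLeast (Z ∩ Set.Icc (min z' τ) z') (d τ) := fun τ =>
    (isCompact_Icc.inter_left hZ).isLeast_sInf ⟨z', hz', min_le_left _ _, le_rfl⟩
  have mc : Monotone c := by
    intro a b hab
    apply (gc b).2
    have := (gc a).1
    exact ⟨this.1, this.2.1, this.2.2.trans (max_le_max le_rfl hab)⟩
  have md : Monotone d := by
    intro a b hab
    apply (ld a).2
    have := (ld b).1
    exact ⟨this.1, (min_le_min le_rfl hab).trans this.2.1, this.2.2⟩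
  let m : ℝ → ℝ → ℝ := fun x τ => |h x (d τ) - h x (c τ)| / (d τ - c τ)
  have hcm : Measurable (fun p : ℝ × ℝ => h p.1 p.2) := hc.measurable
  have mm : Measurable (fun p : ℝ × ℝ => m p.1 p.2) := by
    have h1 : Measurable fun p : ℝ × ℝ => d p.2 := md.measurable.comp measurable_snd
    have h2 : Measurable fun p : ℝ × ℝ => c p.2 := mc.measurable.comp measurable_snd
    have h3 : Measurable fun p : ℝ × ℝ => h p.1 (d p.2) := hcm.comp (measurable_fst.prodMk h1)
    have h4 : Measurable fun p : ℝ × ℝ => h p.1 (c p.2) := hcm.comp (measurable_fst.prodMk h2)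
    exact ((h3.sub h4).abs).div (h1.sub h2)
  have mG : Measurable (fun p : ℝ × ℝ => m p.1 p.2 ^ 2) := mm.pow_const 2
  have cd : ∀ τ ∈ Set.Icc z z', c τ ∈ Z ∧ d τ ∈ Z ∧ z ≤ c τ ∧ c τ ≤ τ ∧ τ ≤ d τ ∧ d τ ≤ z' ∧
      ∀ y ∈ Set.Ioo (c τ) (d τ), y ∉ Z := by
    intro τ hτ
    have h1 := gc τ
    have h2 := ld τ
    rw [max_eq_right hτ.1] at h1
    rw [min_eq_right hτ.2] at h2
    refine ⟨h1.1.1, h2.1.1, h1.1.2.1, h1.1.2.2, h2.1.2.1, h2.1.2.2, fun y hy hyZ => ?_⟩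
    rcases le_total y τ with hle | hle
    · have := h1.2 ⟨hyZ, h1.1.2.1.trans hy.1.le, hle⟩; linarith [hy.1]
    · have := h2.2 ⟨hyZ, hle, hy.2.le.trans h2.1.2.2⟩; linarith [hy.2]
  have mnn : ∀ x, ∀ τ ∈ Set.Icc z z', 0 ≤ m x τ := by
    intro x τ hτ
    have := cd τ hτ
    apply div_nonneg (abs_nonneg _)
    linarith [this.2.2.2.1, this.2.2.2.2.1]
  have mC : ∀ τ ∈ Set.Icc z z', ∫ x in (0:ℝ)..L, m x τ ^ 2 ≤ C := by
    intro τ hτ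
    obtain ⟨h1, h2, h3, h4, h5, h6, h7⟩ := cd τ hτ
    simp only [m, div_pow, sq_abs]
    rcases (h4.trans h5).eq_or_lt with e | hlt
    · simp [e, hC0]
    · rw [intervalIntegral.integral_div, div_le_iff₀ (by have := sub_pos.2 hlt; positivity)]
      exact hgap _ _ h1 h2 h3 hlt h6 h7
  have mcx : ∀ τ, Continuous fun x => m x τ := fun τ =>
    (((hwt _).sub (hwt _)).abs).div_const _
  set μ := (volume : Measure ℝ).restrict (Set.Ioc 0 L) with hμ
  set ν := (volume : Measure ℝ).restrict (Set.Ioc z z') with hν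
  have intG : Integrable (fun p : ℝ × ℝ => m p.1 p.2 ^ 2) (μ.prod ν) := by
    rw [integrable_prod_iff' mG.aestronglyMeasurable]
    constructor
    · refine Eventually.of_forall fun τ => ?_
      have := ((mcx τ).pow 2).intervalIntegrable (μ := volume) 0 L
      rw [intervalIntegrable_iff_integrableOn_Ioc_of_le hL.le] at this
      exact this
    · refine Integrable.mono' (g := fun _ => C) (integrable_const C) ?_ ?_
      · have : StronglyMeasurable fun p : ℝ × ℝ => ‖m p.1 p.2 ^ 2‖ := mG.stronglyMeasurable.norm
        exact (this.integral_prod_left' (μ := μ)).aestronglyMeasurable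
      · rw [hν]
        filter_upwards [ae_restrict_mem measurableSet_Ioc] with τ hτ
        have := mC τ ⟨hτ.1.le, hτ.2⟩
        rw [intervalIntegral.integral_of_le hL.le] at this
        simp only [norm_pow, Real.norm_eq_abs, sq_abs]
        rw [abs_of_nonneg (integral_nonneg fun x => sq_nonneg _)]
        exact this
  have swap : ∫ x, (∫ τ, m x τ ^ 2 ∂ν) ∂μ = ∫ τ, (∫ x, m x τ ^ 2 ∂μ) ∂ν :=
    integral_integral_swap intG
  have sw2 : ∫ x, (∫ τ, m x τ ^ 2 ∂ν) ∂μ ≤ C * (z' - z) := by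
    rw [swap]
    calc _ ≤ ∫ τ, C ∂ν := by
          apply integral_mono_ae
          · exact intG.integral_prod_right
          · exact integrable_const C
          · rw [hν]
            filter_upwards [ae_restrict_mem measurableSet_Ioc] with τ hτ
            have := mC τ ⟨hτ.1.le, hτ.2⟩
            rw [intervalIntegral.integral_of_le hL.le] at this
            exact this
      _ = _ := by
          rw [integral_const, hν]
          simp [hzz.le, mul_comm]
  have px : ∀ᵐ x ∂μ, (h x z' - h x z) ^ 2 ≤ 2 * N ^ 2 * (z' - z) ^ 2
      + 2 * (z' - z) * ∫ τ, m x τ ^ 2 ∂ν := by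
    filter_upwards [intG.prod_right_ae] with x hx
    have i2 : IntervalIntegrable (fun τ => m x τ ^ 2) volume z z' := by
      rw [intervalIntegrable_iff_integrableOn_Ioc_of_le hzz.le]
      exact hx
    have mx : Measurable (m x) := mm.comp (by fun_prop : Measurable fun τ : ℝ => (x, τ))
    have i1 : IntervalIntegrable (m x) volume z z' := by
      have : IntervalIntegrable (fun τ => 1 + m x τ ^ 2) volume z z' :=
        (continuous_const.intervalIntegrable _ _).add i2
      refine this.mono_fun mx.aestronglyMeasurable ?_
      refine Eventually.of_forall fun τ => ?_
      show ‖m x τ‖ ≤ ‖1 + m x τ ^ 2‖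
      rw [Real.norm_eq_abs, Real.norm_eq_abs, abs_of_nonneg (by positivity : 0 ≤ 1 + m x τ ^ 2),
        abs_le]
      constructor <;> nlinarith [sq_nonneg (m x τ - 1), sq_nonneg (m x τ + 1), sq_nonneg (m x τ)]
    -- truncate to make the integrand globally nonnegative
    have P := aux_perx (g := h x) (g' := fun s => F s x) (φ := fun τ => |m x τ|) (N := N)
      (hxt x) hZ hz hz' hzz.le (fun s hs hs' => hd s hs hs' x) i1.abs (fun τ => abs_nonneg _) (by
        intro a b ha hb hza hab hbz hno
        have e : ∫ τ in a..b, |m x τ| = ∫ τ in a..b, |h x b - h x a| / (b - a) := by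
          apply intervalIntegral.integral_congr_Ioo_of_le hab.le
          intro τ hτ
          have hτ' : τ ∈ Set.Icc z z' := ⟨hza.trans hτ.1.le, hτ.2.le.trans hbz⟩
          obtain ⟨h1, h2, h3, h4, h5, h6, h7⟩ := cd τ hτ'
          have ec : c τ = a := by
            apply le_antisymm
            · by_contra! hh
              exact hno _ ⟨hh, h4.trans_lt hτ.2⟩ h1
            · apply (gc τ).2
              exact ⟨ha, hza, hτ.1.le.trans (le_max_right _ _)⟩
          have ed : d τ = b := by
            apply le_antisymm
            · apply (ld τ).2
              exact ⟨hb, (min_le_right _ _).trans hτ.2.le, hbz⟩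
            · by_contra! hh
              exact hno _ ⟨hτ.1.trans_le h5, hh⟩ h2
          simp only [m, ec, ed]
          rw [abs_of_nonneg]
          have := sub_pos.2 hab
          positivity
        rw [e, intervalIntegral.integral_const, smul_eq_mul,
          mul_div_cancel₀ _ (sub_pos.2 hab).ne']) hN
    have cs := aux_cs hzz i1.abs (by simpa only [sq_abs] using i2)
    simp only [sq_abs] at cs
    rw [intervalIntegral.integral_of_le hzz.le (f := fun τ => m x τ ^ 2)] at cs
    set A := ∫ τ in z..z', |m x τ| with hA
    have hA0 : 0 ≤ A := intervalIntegral.integral_nonneg hzz.le fun τ _ => abs_nonneg _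
    have hl : 0 < z' - z := sub_pos.2 hzz
    calc (h x z' - h x z) ^ 2 = |h x z' - h x z| ^ 2 := (sq_abs _).symm
      _ ≤ (N * (z' - z) + A) ^ 2 := by gcongr
      _ ≤ 2 * N ^ 2 * (z' - z) ^ 2 + 2 * A ^ 2 := by nlinarith [sq_nonneg (N * (z' - z) - A)]
      _ ≤ _ := by rw [hν]; linarith
  rw [intervalIntegral.integral_of_le hL.le]
  calc _ ≤ ∫ x, (2 * N ^ 2 * (z' - z) ^ 2 + 2 * (z' - z) * ∫ τ, m x τ ^ 2 ∂ν) ∂μ := by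
        apply integral_mono_ae _ _ px
        · have := (((hwt z').sub (hwt z)).pow 2).intervalIntegrable (μ := volume) 0 L
          rw [intervalIntegrable_iff_integrableOn_Ioc_of_le hL.le] at this
          exact this
        · exact (integrable_const _).add (intG.integral_prod_left.const_mul _)
    _ = 2 * N ^ 2 * (z' - z) ^ 2 * L + 2 * (z' - z) * ∫ x, (∫ τ, m x τ ^ 2 ∂ν) ∂μ := by
        rw [integral_add (integrable_const _) (intG.integral_prod_left.const_mul _),
          integral_const]
        have e1 : μ.real Set.univ = L := by simp [hμ, hL.le]
        have e2 : ∀ a : ℝ, μ.real Set.univ • a = a * L := by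
          intro a; rw [e1, smul_eq_mul, mul_comm]
        rw [e2]
        congr 1
        exact integral_const_mul _ _
    _ ≤ 2 * N ^ 2 * (z' - z) ^ 2 * L + 2 * (z' - z) * (C * (z' - z)) := by
        have := sub_pos.2 hzz
        gcongr
    _ = _ := by ring


lemma aux_reg_all {L T β : ℝ} (hL : 0 < L) (hβ : β < 0) {h H : ℝ → ℝ → ℝ}
    (s : IsStepPDESol L T β h H) : ∀ t ∈ Set.Ico (0:ℝ) T, auxReg L h t := by
  by_contra hcon
  push Not at hcon
  have hcont := s.2.2.2.1
  have hwt : ∀ t, Continuous fun x => h x t := fun t =>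
    hcont.comp (by fun_prop : Continuous fun x : ℝ => (x, t))
  let Bd : Set ℝ := {t | t ∈ Set.Ico (0:ℝ) T ∧ ¬ auxReg L h t}
  let Z := closure Bd
  have hZ : IsClosed Z := isClosed_closure
  have hZI : Z ⊆ Set.Icc 0 T := by
    apply closure_minimal _ isClosed_Icc
    intro t ht
    exact ⟨ht.1.1, ht.1.2.le⟩
  have hreg : ∀ t ∈ Set.Ico (0:ℝ) T, t ∉ Z → auxReg L h t := by
    intro t ht htZ
    by_contra hh
    exact htZ (subset_closure ⟨ht, hh⟩)
  have hBne : Bd.Nonempty := by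
    obtain ⟨t, ht, hh⟩ := hcon
    exact ⟨t, ht, hh⟩
  have : Nonempty Z := hBne.closure.to_subtype
  have : CompleteSpace Z := hZ.completeSpace_coe
  obtain ⟨n, ⟨t0, ht0⟩⟩ := nonempty_interior_of_iUnion_of_closed
    (f := fun n : ℕ => {t : Z | auxK n (fun x => h x t)})
    (fun n => (aux_K_closed hcont n).preimage continuous_subtype_val) (by
      apply Set.eq_univ_of_forall
      intro t
      rw [Set.mem_iUnion]
      exact aux_K_ex hL s (hZI t.2))
  rw [mem_interior_iff_mem_nhds, Metric.mem_nhds_iff] at ht0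
  obtain ⟨ε', hε', hball⟩ := ht0
  set ε := min ε' (1/2) with hε
  have hε0 : 0 < ε := by rw [hε]; positivity
  have hε1 : ε ≤ 1/2 := min_le_right _ _
  have hk : ∀ y ∈ Z, |y - t0| < ε → auxK n (fun x => h x y) := by
    intro y hy hyt
    have : (⟨y, hy⟩ : Z) ∈ Metric.ball t0 ε' := by
      rw [Metric.mem_ball, Subtype.dist_eq, Real.dist_eq]
      exact hyt.trans_le (min_le_left _ _)
    exact hball this
  obtain ⟨s0, hs0, hs0t⟩ := Metric.mem_closure_iff.1 t0.2 ε hε0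
  rw [Real.dist_eq, abs_lt] at hs0t
  have hs0Z : s0 ∈ Z := subset_closure hs0
  have hk' : ∀ y ∈ Z, s0 ≤ y → y < t0 + ε → auxK n (fun x => h x y) := by
    intro y hy h1 h2
    apply hk y hy
    rw [abs_lt]; constructor <;> linarith [hs0t.2]
  obtain ⟨N', hN', hR⟩ := aux_K_R (T := T) hL hβ n (Nat.cast_nonneg n)
  obtain ⟨C, hC, hgap⟩ := aux_gap (T := T) hL hβ (Nat.cast_nonneg n)
  apply hs0.2
  refine ⟨2 * C + 2 * (2 * N' ^ 2 * L + 2 * C), by positivity, ?_⟩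
  have hlt : s0 < min T (t0 + ε) := lt_min hs0.1.2 (by linarith [hs0t.1])
  filter_upwards [Ioo_mem_nhdsGT hlt] with t ht
  have htT : t < T := ht.2.trans_le (min_le_left _ _)
  have htε : t < t0 + ε := ht.2.trans_le (min_le_right _ _)
  obtain ⟨c, ⟨hcZ, hc1, hc2⟩, hcmax⟩ := (isCompact_Icc.inter_left hZ :
    IsCompact (Z ∩ Set.Icc s0 t)).exists_isGreatest ⟨s0, hs0Z, le_rfl, ht.1.le⟩
  have hGap : ∀ c d, c ∈ Z → s0 ≤ c → c < d → d ≤ t → (∀ y ∈ Set.Ioo c d, y ∉ Z) →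
      ∫ x in (0:ℝ)..L, (h x d - h x c) ^ 2 ≤ C * (d - c) ^ 2 := by
    intro c d hcZ hsc hcd hdt hno
    apply hgap s (hZI hcZ).1 hcd (by linarith) (by linarith [hs0t.2])
      (hk' c hcZ hsc (by linarith))
    intro y hy
    exact hreg y ⟨(hZI hcZ).1.trans hy.1.le, by linarith [hy.2]⟩ (hno y hy)
  have b1 : ∫ x in (0:ℝ)..L, (h x c - h x s0) ^ 2 ≤ (2 * N' ^ 2 * L + 2 * C) * (t - s0) ^ 2 := by
    rcases hc1.eq_or_lt with e | hlt
    · rw [← e]; simp; positivity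
    · have := aux_Z (F := fun t x => auxR L h H t x) hL hN' hC hcont hZ hs0Z hcZ hlt (by
        intro r hr hr' x
        have hrI : r ∈ Set.Ico (0:ℝ) T := ⟨(hZI hr).1, by linarith [hr'.2]⟩
        exact ⟨aux_R_Ici hβ s hrI x, hR s ⟨hrI.1, hrI.2.le⟩
          (hk' r hr hr'.1 (by linarith [hr'.2])) x⟩) (by
        intro a b ha _ hsa hab hbc hno
        exact hGap a b ha hsa hab (hbc.trans hc2) hno)
      refine this.trans ?_
      have : 0 ≤ c - s0 := by linarith
      gcongr
  have b2 : ∫ x in (0:ℝ)..L, (h x t - h x c) ^ 2 ≤ C * (t - s0) ^ 2 := by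
    rcases hc2.eq_or_lt with e | hlt
    · rw [← e]; simp; positivity
    · refine (hGap c t hcZ hc1 hlt le_rfl ?_).trans ?_
      · intro y hy hyZ
        have := hcmax ⟨hyZ, hc1.trans hy.1.le, hy.2.le⟩
        linarith [hy.1]
      · have : 0 ≤ t - c := by linarith
        gcongr
  have ct := hwt t
  have cc := hwt c
  have cs := hwt s0
  calc ∫ x in (0:ℝ)..L, (h x t - h x s0) ^ 2
      ≤ ∫ x in (0:ℝ)..L, (2 * (h x t - h x c) ^ 2 + 2 * (h x c - h x s0) ^ 2) := by
        apply intervalIntegral.integral_mono_on hL.le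
        · apply Continuous.intervalIntegrable; fun_prop
        · apply Continuous.intervalIntegrable; fun_prop
        · intro x _
          nlinarith [sq_nonneg ((h x t - h x c) - (h x c - h x s0))]
    _ = 2 * (∫ x in (0:ℝ)..L, (h x t - h x c) ^ 2) + 2 * ∫ x in (0:ℝ)..L, (h x c - h x s0) ^ 2 := by
        rw [intervalIntegral.integral_add, intervalIntegral.integral_const_mul,
          intervalIntegral.integral_const_mul]
        · apply Continuous.intervalIntegrable; fun_prop
        · apply Continuous.intervalIntegrable; fun_prop
    _ ≤ _ := by linarith

lemma aux_reg_sub {L : ℝ} (hL : 0 < L) {h k : ℝ → ℝ → ℝ} (ch : ∀ t, Continuous fun x => h x t)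
    (ck : ∀ t, Continuous fun x => k x t) {t : ℝ} (rh : auxReg L h t) (rk : auxReg L k t) :
    auxReg L (fun x t => h x t - k x t) t := by
  obtain ⟨C, hC, h1⟩ := rh
  obtain ⟨D, hD, h2⟩ := rk
  refine ⟨2 * C + 2 * D, by positivity, ?_⟩
  filter_upwards [h1, h2] with t' h1 h2
  have := ch t
  have := ch t'
  have := ck t
  have := ck t'
  calc ∫ x in (0:ℝ)..L, ((h x t' - k x t') - (h x t - k x t)) ^ 2
      ≤ ∫ x in (0:ℝ)..L, (2 * (h x t' - h x t) ^ 2 + 2 * (k x t' - k x t) ^ 2) := by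
        apply intervalIntegral.integral_mono_on hL.le
        · apply Continuous.intervalIntegrable; fun_prop
        · apply Continuous.intervalIntegrable; fun_prop
        · intro x _
          nlinarith [sq_nonneg ((h x t' - h x t) + (k x t' - k x t))]
    _ = 2 * (∫ x in (0:ℝ)..L, (h x t' - h x t) ^ 2) + 2 * ∫ x in (0:ℝ)..L, (k x t' - k x t) ^ 2 := by
        rw [intervalIntegral.integral_add, intervalIntegral.integral_const_mul,
          intervalIntegral.integral_const_mul]
        · apply Continuous.intervalIntegrable; fun_prop
        · apply Continuous.intervalIntegrable; fun_prop
    _ ≤ _ := by linarith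

/-- `L²`-stability (and hence uniqueness) for the continuum step-flow PDE:
there is a constant `C`, depending only on `β, M, L, T`, such that any two solutions `h₁, h₂`
(with slope bounded above by `β/2 < 0` and `|∂ₓ²h₁| ≤ M`) satisfy
`∫₀^L (h₁−h₂)²(·,t) ≤ C ∫₀^L (h₁−h₂)²(·,0)` for all `t ∈ [0,T]`; in particular solutions with
the same initial data coincide. -/
theorem stmt_5 (L T β M : ℝ) (hL : 0 < L) (hT : 0 < T) (hβ : β < 0) (hM : 0 < M) :
    ∃ C : ℝ, 0 < C ∧
      ∀ h₁ h₂ H₁ H₂ : ℝ → ℝ → ℝ,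
        IsStepPDESol L T β h₁ H₁ → IsStepPDESol L T β h₂ H₂ →
        (∀ t ∈ Set.Icc (0:ℝ) T, ∀ x : ℝ, |iteratedDeriv 2 (fun z => h₁ z t) x| ≤ M) →
        ((∀ t ∈ Set.Icc (0:ℝ) T,
            (∫ x in (0:ℝ)..L, (h₁ x t - h₂ x t) ^ 2)
              ≤ C * ∫ x in (0:ℝ)..L, (h₁ x 0 - h₂ x 0) ^ 2) ∧
          ((∀ x : ℝ, h₁ x 0 = h₂ x 0) →
            ∀ x : ℝ, ∀ t ∈ Set.Icc (0:ℝ) T, h₁ x t = h₂ x t)) := by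
  obtain ⟨K, hK, hst⟩ := aux_static hL hβ hM.le
  refine ⟨exp (2 * K * T), exp_pos _, ?_⟩
  intro h₁ h₂ H₁ H₂ s₁ s₂ hb
  have c1 := s₁.2.2.2.1
  have c2 := s₂.2.2.2.1
  have w1 : ∀ t, Continuous fun x => h₁ x t := fun t =>
    c1.comp (by fun_prop : Continuous fun x : ℝ => (x, t))
  have w2 : ∀ t, Continuous fun x => h₂ x t := fun t =>
    c2.comp (by fun_prop : Continuous fun x : ℝ => (x, t))
  have cw : Continuous (fun p : ℝ × ℝ => (fun x t => h₁ x t - h₂ x t) p.1 p.2) := c1.sub c2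
  set E : ℝ → ℝ := fun t => ∫ x in (0:ℝ)..L, ((fun x t => h₁ x t - h₂ x t) x t - (fun _ => (0:ℝ)) x) ^ 2
    with hE
  have cE : Continuous E := aux_E_cont cw continuous_const L
  have eE : ∀ t, E t = ∫ x in (0:ℝ)..L, (h₁ x t - h₂ x t) ^ 2 := by
    intro t; simp only [hE, sub_zero]
  have main : ∀ t ∈ Set.Icc (0:ℝ) T, E t ≤ exp (2 * K * T) * E 0 := by
    intro t ht
    have G := aux_gron (a := 0) (b := T) (K := 2 * K) (ε := 0) cE
      (f' := fun t => 2 * ∫ x in (0:ℝ)..L, ((fun x t => h₁ x t - h₂ x t) x t - (fun _ => (0:ℝ)) x)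
        * (auxR L h₁ H₁ t x - auxR L h₂ H₂ t x)) (by
        intro r hr
        obtain ⟨m1, N1, hN1⟩ := aux_Rall hL hβ s₁ ⟨hr.1, hr.2.le⟩
        obtain ⟨m2, N2, hN2⟩ := aux_Rall hL hβ s₂ ⟨hr.1, hr.2.le⟩
        obtain ⟨C, hC0, hC⟩ := aux_reg_sub hL w1 w2 (aux_reg_all hL hβ s₁ r hr)
          (aux_reg_all hL hβ s₂ r hr)
        exact aux_deriv (N := N1 + N2) hL hC0 cw continuous_const
          (fun x => (aux_R_Ici hβ s₁ hr x).sub (aux_R_Ici hβ s₂ hr x)) (m1.sub m2)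
          (fun x => (abs_sub _ _).trans (add_le_add (hN1 x) (hN2 x))) hC) (by
        intro r hr
        have hrI : r ∈ Set.Icc (0:ℝ) T := ⟨hr.1, hr.2.le⟩
        have st := hst _ _ _ _ _ _ _ _ _ _ _ _ (aux_jet s₁ hrI) (aux_jet s₂ hrI)
          (hb r hrI) (fun x => s₁.2.2.2.2.1 x r hrI) (fun x => s₂.2.2.2.2.1 x r hrI)
        have st' : ∫ x in (0:ℝ)..L, (h₁ x r - h₂ x r) * (auxR L h₁ H₁ r x - auxR L h₂ H₂ r x)
          ≤ K * ∫ x in (0:ℝ)..L, (h₁ x r - h₂ x r) ^ 2 := st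
        rw [← eE] at st'
        simp only [sub_zero]
        linarith) t ht
    rw [gronwallBound_ε0, sub_zero] at G
    have E0 : 0 ≤ E 0 := intervalIntegral.integral_nonneg hL.le fun x _ => sq_nonneg _
    refine G.trans ?_
    rw [mul_comm]
    have : 2 * K * t ≤ 2 * K * T := by have := ht.2; gcongr
    gcongr
  refine ⟨fun t ht => ?_, ?_⟩
  · have := main t ht
    rwa [eE, eE] at this
  · intro h0 x t ht
    have e0 : E 0 = 0 := by rw [eE]; simp [h0]
    have et : E t ≤ 0 := by have := main t ht; rwa [e0, mul_zero] at this
    rw [eE] at et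
    have ct : Continuous fun x => (h₁ x t - h₂ x t) ^ 2 := ((w1 t).sub (w2 t)).pow 2
    have zero : ∀ y ∈ Set.Icc 0 L, h₁ y t = h₂ y t := by
      intro y hy
      by_contra hne
      have : 0 < ∫ x in (0:ℝ)..L, (h₁ x t - h₂ x t) ^ 2 := by
        apply intervalIntegral.integral_pos hL ct.continuousOn (fun x _ => sq_nonneg _)
        refine ⟨y, hy, ?_⟩
        have := sub_ne_zero.2 hne
        positivity
      linarith
    have hP : Function.Periodic (fun x => h₁ x t - h₂ x t) L := by
      intro x
      show h₁ (x + L) t - h₂ (x + L) t = h₁ x t - h₂ x t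
      rw [s₁.2.1 t ht, s₂.2.1 t ht]; ring
    obtain ⟨y, hy, e⟩ := hP.exists_mem_Ico₀ hL x
    have := zero y ⟨hy.1, hy.2.le⟩
    linarith
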